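/- arXiv:1007.4870 — 5 statements merged into one kernel-verified Lean document; each statement's English description precedes it below -/
import Mathlib

section
/- Let X be a real random variable taking strictly positive values, and let m, n be non-negative integers with m + n > 2. Let D_m and D_n be independent random variables distributed respectively like m⊙X and n⊙X (the distance from the origin after m, respectively n, independent steps whose lengths are independent copies of X and whose directions are independent and uniform on the unit circle, all lengths and directions independent). Then Pr(D_m > D_n) = m/(m+n). -/
open MeasureTheory ProbabilityTheory
open scoped ENNReal

/-- The unit vector in the plane with direction angle `θ`. -/
noncomputable def stepVec (θ : ℝ) : EuclideanSpace ℝ (Fin 2) :=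
  (WithLp.equiv 2 (Fin 2 → ℝ)).symm ![Real.cos θ, Real.sin θ]

/-- The uniform probability distribution on the unit circle of the plane. -/
noncomputable def uniformCircle : Measure (EuclideanSpace ℝ (Fin 2)) :=
  Measure.map stepVec
    ((ENNReal.ofReal (2 * Real.pi))⁻¹ • volume.restrict (Set.Ioc 0 (2 * Real.pi)))

/-- The distribution of `n ⊙ X`: the distance from the origin after `n` independent
steps whose lengths are i.i.d. with law `μ` and whose directions are i.i.d. uniform
on the unit circle, all independent. -/
noncomputable def walkDist (μ : Measure ℝ) (n : ℕ) : Measure ℝ :=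
  Measure.map
    (fun p : (Fin n → ℝ) × (Fin n → EuclideanSpace ℝ (Fin 2)) => ‖∑ i, p.1 i • p.2 i‖)
    ((Measure.pi fun _ => μ).prod (Measure.pi fun _ => uniformCircle))


noncomputable def rwG (a b c : ℝ) : ℝ := Real.arccos ((a^2+b^2-c^2)/(2*a*b))

lemma rwG_deg (a b c : ℝ) (ha : 0 < a) (hb : 0 < b) (hc : 0 < c) (h : a + b ≤ c) :
    rwG a b c = Real.pi ∧ rwG b c a = 0 ∧ rwG c a b = 0 := by
  unfold rwG
  refine ⟨?_, ?_, ?_⟩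
  · rw [Real.arccos_eq_pi, div_le_iff₀ (by positivity)]; nlinarith
  · rw [Real.arccos_eq_zero, le_div_iff₀ (by positivity)]; nlinarith
  · rw [Real.arccos_eq_zero, le_div_iff₀ (by positivity)]; nlinarith

lemma rwG_sum (a b c : ℝ) (ha : 0 < a) (hb : 0 < b) (hc : 0 < c) :
    rwG a b c + rwG b c a + rwG c a b = Real.pi := by
  rcases le_or_gt (a+b) c with h | h1
  · obtain ⟨h1,h2,h3⟩ := rwG_deg a b c ha hb hc h; linarith
  rcases le_or_gt (b+c) a with h | h2
  · obtain ⟨h1,h2,h3⟩ := rwG_deg b c a hb hc ha h; linarith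
  rcases le_or_gt (c+a) b with h | h3
  · obtain ⟨h1,h2,h3⟩ := rwG_deg c a b hc ha hb h; linarith
  set u := (a^2+b^2-c^2)/(2*a*b) with hu
  have hu1 : u ≤ 1 := by rw [hu, div_le_one (by positivity)]; nlinarith
  have hu2 : -1 ≤ u := by rw [hu, le_div_iff₀ (by positivity)]; nlinarith
  have huab : 2*(a*b*u) = a^2+b^2-c^2 := by rw [hu]; field_simp
  set s := Real.sqrt (1-u^2)
  have hs : s^2 = 1-u^2 := Real.sq_sqrt (by nlinarith)
  let x : ℂ := ⟨a, 0⟩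
  let y : ℂ := ⟨b*u, b*s⟩
  have nx : ‖x‖ = a := by
    rw [← sq_eq_sq₀ (norm_nonneg _) ha.le, ← Complex.normSq_eq_norm_sq, Complex.normSq_mk]; ring
  have ny : ‖y‖ = b := by
    rw [← sq_eq_sq₀ (norm_nonneg _) hb.le, ← Complex.normSq_eq_norm_sq, Complex.normSq_mk]
    linear_combination b^2*hs
  have nxy : ‖x-y‖ = c := by
    rw [← sq_eq_sq₀ (norm_nonneg _) hc.le, ← Complex.normSq_eq_norm_sq, Complex.normSq_apply]
    simp [x,y]
    linear_combination b^2*hs - huab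
  have nyx : ‖y-x‖ = c := by rw [norm_sub_rev, nxy]
  have hy : y ≠ 0 := by rw [← norm_pos_iff, ny]; exact hb
  have key := InnerProductGeometry.angle_add_angle_sub_add_angle_sub_eq_pi x hy
  simp only [InnerProductGeometry.angle, nx, ny, nxy, nyx] at key
  have i1 : inner ℝ x y = (a^2+b^2-c^2)/2 := by
    have := norm_sub_sq_real x y
    rw [nx, ny, nxy] at this; linarith
  have i1' : inner ℝ y x = (a^2+b^2-c^2)/2 := by rw [real_inner_comm, i1]
  rw [inner_sub_right, inner_sub_right, i1, i1', real_inner_self_eq_norm_sq,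
    real_inner_self_eq_norm_sq, nx, ny] at key
  unfold rwG
  rw [← key]
  rw [show (a^2+b^2-c^2)/(2*a*b) = (a^2+b^2-c^2)/2/(a*b) by field_simp,
    show (b^2+c^2-a^2)/(2*b*c) = (b^2 - (a^2+b^2-c^2)/2)/(b*c) by field_simp; ring,
    show (c^2+a^2-b^2)/(2*c*a) = (a^2 - (a^2+b^2-c^2)/2)/(a*c) by field_simp; ring]
  ring

noncomputable instance : MeasurableSpace Circle := borel _
instance : BorelSpace Circle := ⟨rfl⟩
instance : Fact (0 < 2*Real.pi) := ⟨by positivity⟩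

noncomputable def rwK : Measure Circle :=
  Measure.map AddCircle.toCircle (AddCircle.haarAddCircle (T := 2*Real.pi))

lemma rw_mT : Measurable (AddCircle.toCircle (T := 2*Real.pi)) :=
  AddCircle.continuous_toCircle.measurable

instance : IsProbabilityMeasure rwK :=
  Measure.isProbabilityMeasure_map rw_mT.aemeasurable

lemma rwK_eq (t : ℝ) : rwK = Measure.map Circle.exp
    ((ENNReal.ofReal (2 * Real.pi))⁻¹ • volume.restrict (Set.Ioc t (t + 2 * Real.pi))) := by
  have h0 : ENNReal.ofReal (2 * Real.pi) ≠ 0 := by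
    simp [Real.pi_pos]
  have h1 : AddCircle.haarAddCircle (T := 2*Real.pi)
      = (ENNReal.ofReal (2 * Real.pi))⁻¹ • (volume : Measure (AddCircle (2*Real.pi))) := by
    rw [AddCircle.volume_eq_smul_haarAddCircle, smul_smul, ENNReal.inv_mul_cancel h0 ENNReal.ofReal_ne_top,
      one_smul]
  rw [rwK, h1, ← (AddCircle.measurePreserving_mk (2*Real.pi) t).map_eq, Measure.map_smul,
    Measure.map_smul, Measure.map_map rw_mT (AddCircle.measurePreserving_mk _ t).measurable]
  congr 2
  ext x
  simp [AddCircle.toCircle_apply_mk, Real.pi_ne_zero]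

lemma rwK_inv (v : Circle) : Measure.map (fun u => v * u) rwK = rwK := by
  obtain ⟨a, rfl⟩ : ∃ a, AddCircle.toCircle (T := 2*Real.pi) a = v := by
    refine ⟨((Complex.arg v : ℝ) : AddCircle (2*Real.pi)), ?_⟩
    rw [AddCircle.toCircle_apply_mk]
    simp [Real.pi_ne_zero]
  unfold rwK
  conv_rhs => rw [← map_add_left_eq_self (AddCircle.haarAddCircle (T := 2*Real.pi)) a]
  rw [Measure.map_map (by fun_prop) rw_mT, Measure.map_map rw_mT (by fun_prop)]
  congr 1
  ext x
  simp [AddCircle.toCircle_add]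

lemma rw_vol (t : ℝ) :
    (volume.restrict (Set.Ioc (-Real.pi) Real.pi)) {θ | Real.cos θ = t} = 0 := by
  rw [Measure.restrict_apply' measurableSet_Ioc]
  refine measure_mono_null (t := {Real.arccos t, - Real.arccos t}) ?_
    (Set.Finite.measure_zero (by simp) _)
  rintro θ ⟨h, h1, h2⟩
  simp only [Set.mem_ofPred_eq] at h
  have : |θ| = Real.arccos t := by
    rw [← h, ← Real.cos_abs, Real.arccos_cos (abs_nonneg _) (abs_le.2 ⟨h1.le, h2⟩)]
  rcases abs_choice θ with h' | h' <;> simp [← this, h']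

lemma rw_vol_lt (t : ℝ) :
    (volume.restrict (Set.Ioc (-Real.pi) Real.pi)) {θ | Real.cos θ < t}
      = ENNReal.ofReal (2 * Real.arccos (-t)) := by
  have h1 : ∀ᵐ θ ∂(volume.restrict (Set.Ioc (-Real.pi) Real.pi)), (θ ∈ {θ | Real.cos θ < t} ↔
      θ ∈ (Set.Icc (-Real.arccos t) (Real.arccos t))ᶜ) := by
    have h0 : ∀ᵐ θ ∂(volume.restrict (Set.Ioc (-Real.pi) Real.pi)), Real.cos θ ≠ 1 := by
      rw [ae_iff]; simpa using rw_vol 1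
    filter_upwards [h0, ae_restrict_mem measurableSet_Ioc] with θ h0 hm
    change Real.cos θ < t ↔ ¬ (-Real.arccos t ≤ θ ∧ θ ≤ Real.arccos t)
    rw [← abs_le, not_le]
    have e : Real.arccos (Real.cos θ) = |θ| := by
      rw [← Real.cos_abs, Real.arccos_cos (abs_nonneg _) (abs_le.2 ⟨hm.1.le, hm.2⟩)]
    rw [← e]
    constructor
    · intro h
      rcases le_or_gt t 1 with ht | ht
      · exact Real.strictAntiOn_arccos ⟨Real.neg_one_le_cos θ, Real.cos_le_one θ⟩
          ⟨(Real.neg_one_le_cos θ).trans h.le, ht⟩ h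
      · rw [Real.arccos_eq_zero.2 ht.le]
        exact Real.arccos_pos.2 (lt_of_le_of_ne (Real.cos_le_one θ) h0)
    · intro h
      by_contra h'
      exact absurd (Real.antitone_arccos (not_lt.1 h')) (not_le.2 h)
  rw [measure_congr (Filter.eventuallyEq_set.2 h1), measure_compl measurableSet_Icc (measure_ne_top _ _),
    Measure.restrict_apply MeasurableSet.univ, Set.univ_inter,
    Measure.restrict_congr_set Ioc_ae_eq_Icc, 
    Measure.restrict_apply measurableSet_Icc, Set.inter_eq_left.2]
  · rw [Real.volume_Icc, Real.volume_Ioc, ← ENNReal.ofReal_sub _ (by linarith [Real.arccos_nonneg t]), Real.arccos_neg]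
    congr 1; ring
  · exact Set.Icc_subset_Icc (by linarith [Real.arccos_le_pi t]) (Real.arccos_le_pi t)

lemma rw_polar (x : ℂ) : ∃ α : Circle, x = (α : ℂ) * (‖x‖ : ℂ) := by
  refine ⟨Circle.exp (Complex.arg x), ?_⟩
  rw [Circle.coe_exp, mul_comm, Complex.norm_mul_exp_arg_mul_I]

lemma rwK_norm_mem (x y : ℂ) (S : Set ℝ) (hS : MeasurableSet S) :
    rwK {u : Circle | ‖x + (u : ℂ) * y‖ ∈ S} = (ENNReal.ofReal (2 * Real.pi))⁻¹ *
      (volume.restrict (Set.Ioc (-Real.pi) Real.pi))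
        {θ | Real.sqrt (‖x‖^2 + ‖y‖^2 + 2*‖x‖*‖y‖*Real.cos θ) ∈ S} := by
  obtain ⟨α, hα⟩ := rw_polar x
  obtain ⟨β, hβ⟩ := rw_polar y
  have hm : Measurable fun u : Circle => ‖((‖x‖ : ℝ) : ℂ) + (u : ℂ) * ((‖y‖ : ℝ) : ℂ)‖ := by
    apply Continuous.measurable; fun_prop
  have hms : MeasurableSet {u : Circle | ‖((‖x‖ : ℝ) : ℂ) + (u : ℂ) * ((‖y‖ : ℝ) : ℂ)‖ ∈ S} := hm hS
  have h1 : rwK {u : Circle | ‖x + (u : ℂ) * y‖ ∈ S}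
      = rwK {u : Circle | ‖((‖x‖ : ℝ) : ℂ) + (u : ℂ) * ((‖y‖ : ℝ) : ℂ)‖ ∈ S} := by
    conv_rhs => rw [← rwK_inv (α⁻¹ * β)]
    rw [Measure.map_apply (by fun_prop) hms]
    congr 1
    ext u
    simp only [Set.mem_ofPred_eq, Set.mem_preimage]
    have e : x + (u : ℂ) * y = (α : ℂ) *
      (((‖x‖ : ℝ) : ℂ) + ((α⁻¹ * β * u : Circle) : ℂ) * ((‖y‖ : ℝ) : ℂ)) := by
      conv_lhs => rw [hα, hβ]
      have : (α : ℂ) ≠ 0 := Circle.coe_ne_zero α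
      push_cast
      field_simp
    rw [e, norm_mul, Circle.norm_coe, one_mul]
  rw [h1, rwK_eq (-Real.pi), show -Real.pi + 2 * Real.pi = Real.pi by ring,
    Measure.map_smul, Measure.smul_apply,
    Measure.map_apply (Circle.exp.continuous.measurable) hms, smul_eq_mul]
  congr 2
  ext θ
  simp only [Set.mem_ofPred_eq, Set.mem_preimage]
  have : ‖((‖x‖ : ℝ) : ℂ) + ((Circle.exp θ : Circle) : ℂ) * ((‖y‖ : ℝ) : ℂ)‖ =
      Real.sqrt (‖x‖^2 + ‖y‖^2 + 2*‖x‖*‖y‖*Real.cos θ) := by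
    rw [Complex.norm_def]
    congr 1
    rw [Circle.coe_exp, Complex.normSq_apply, Complex.exp_mul_I, ← Complex.ofReal_cos,
      ← Complex.ofReal_sin]
    simp [-Complex.ofReal_cos, -Complex.ofReal_sin]
    linear_combination ‖y‖^2 * Real.sin_sq_add_cos_sq θ
  rw [this]

lemma rwK_lt (x y : ℂ) (c : ℝ) (hx : x ≠ 0) (hy : y ≠ 0) (hc : 0 < c) :
    rwK {u : Circle | ‖x + (u : ℂ) * y‖ < c} = ENNReal.ofReal (rwG ‖x‖ ‖y‖ c / Real.pi) := by
  have hx' := norm_pos_iff.2 hx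
  have hy' := norm_pos_iff.2 hy
  have h := rwK_norm_mem x y (Set.Iio c) measurableSet_Iio
  simp only [Set.mem_Iio] at h
  rw [h]
  have : {θ | Real.sqrt (‖x‖^2 + ‖y‖^2 + 2*‖x‖*‖y‖*Real.cos θ) < c}
      = {θ | Real.cos θ < - ((‖x‖^2+‖y‖^2-c^2)/(2*‖x‖*‖y‖))} := by
    ext θ
    simp only [Set.mem_ofPred_eq]
    rw [Real.sqrt_lt' hc, ← neg_div, lt_div_iff₀ (by positivity)]
    constructor <;> intro h <;> linarith
  rw [this, rw_vol_lt, neg_neg, ← rwG, ← ENNReal.ofReal_inv_of_pos (by positivity),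
    ← ENNReal.ofReal_mul (by positivity)]
  congr 1
  field_simp

lemma rwK_tie (x y : ℂ) (c : ℝ) (hx : x ≠ 0) (hy : y ≠ 0) :
    rwK {u : Circle | ‖x + (u : ℂ) * y‖ = c} = 0 := by
  have hx' := norm_pos_iff.2 hx
  have hy' := norm_pos_iff.2 hy
  have h := rwK_norm_mem x y {c} (measurableSet_singleton c)
  simp only [Set.mem_singleton_iff] at h
  rw [h, mul_eq_zero]; right
  refine measure_mono_null ?_ (rw_vol (- ((‖x‖^2+‖y‖^2-c^2)/(2*‖x‖*‖y‖))))
  intro θ h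
  simp only [Set.mem_ofPred_eq] at h ⊢
  have h2 : ‖x‖^2 + ‖y‖^2 + 2*‖x‖*‖y‖*Real.cos θ = c^2 := by
    rw [← h, Real.sq_sqrt]
    nlinarith [Real.neg_one_le_cos θ, sq_nonneg (‖x‖-‖y‖), mul_pos hx' hy']
  rw [← neg_div, eq_div_iff (by positivity)]
  linarith

/-- Rotation invariant probability measure without atom at zero. -/
structure RWGood (A : Measure ℂ) : Prop where
  prob : IsProbabilityMeasure A
  inv : ∀ u : Circle, MeasurePreserving (fun z : ℂ => (u : ℂ) * z) A A
  zero : A {0} = 0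

lemma RWGood.ae {A : Measure ℂ} (h : RWGood A) : ∀ᵐ x ∂A, x ≠ 0 := by
  rw [ae_iff]; simpa using h.zero

/-- Averaging over a rotation of the second vector. -/
lemma rw_avg (A B C : Measure ℂ) [IsProbabilityMeasure A] [IsProbabilityMeasure C]
    (hB : RWGood B) (R : ℝ → ℝ → Prop) (hR : MeasurableSet {p : ℝ × ℝ | R p.1 p.2}) :
    (A.prod (B.prod C)) {t | R ‖t.1 + t.2.1‖ ‖t.2.2‖}
      = ∫⁻ t, rwK {u : Circle | R ‖t.1 + (u : ℂ) * t.2.1‖ ‖t.2.2‖} ∂(A.prod (B.prod C)) := by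
  have := hB.prob
  have hm : Measurable fun p : Circle × (ℂ × ℂ × ℂ) =>
      (‖p.2.1 + (p.1 : ℂ) * p.2.2.1‖, ‖p.2.2.2‖) := by
    apply Continuous.measurable; fun_prop
  have hm0 : Measurable fun p : (ℂ × ℂ × ℂ) => (‖p.1 + p.2.1‖, ‖p.2.2‖) := by
    apply Continuous.measurable; fun_prop
  have h1 := Measure.prod_apply (μ := rwK) (ν := A.prod (B.prod C)) (hm hR)
  have h2 := Measure.prod_apply_symm (μ := rwK) (ν := A.prod (B.prod C)) (hm hR)
  rw [h1] at h2
  refine Eq.trans ?_ h2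
  have h3 : ∀ u : Circle, (A.prod (B.prod C)) (Prod.mk u ⁻¹' ((fun p : Circle × (ℂ × ℂ × ℂ) =>
      (‖p.2.1 + (p.1 : ℂ) * p.2.2.1‖, ‖p.2.2.2‖)) ⁻¹' {p : ℝ × ℝ | R p.1 p.2}))
      = (A.prod (B.prod C)) {t | R ‖t.1 + t.2.1‖ ‖t.2.2‖} := by
    intro u
    have mp := (MeasurePreserving.id A).prod ((hB.inv u).prod (MeasurePreserving.id C))
    exact mp.measure_preimage (hm0 hR).nullMeasurableSet
  simp only [h3]
  simp

lemma rw_tie (A B C : Measure ℂ) (hA : RWGood A) (hB : RWGood B) [IsProbabilityMeasure C] :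
    (A.prod (B.prod C)) {t | ‖t.1 + t.2.1‖ = ‖t.2.2‖} = 0 := by
  have := hA.prob
  have := hB.prob
  rw [rw_avg A B C hB (fun a b => a = b) (measurableSet_eq_fun measurable_fst measurable_snd),
    lintegral_eq_zero_iff']
  · have h1 := (Measure.quasiMeasurePreserving_fst (μ := A) (ν := B.prod C)).ae hA.ae
    have h2 := ((Measure.quasiMeasurePreserving_fst (μ := B) (ν := C)).comp
      (Measure.quasiMeasurePreserving_snd (μ := A) (ν := B.prod C))).ae hB.ae
    filter_upwards [h1, h2] with t h1 h2
    exact rwK_tie _ _ _ h1 h2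
  · have hm : Measurable fun p : Circle × (ℂ × ℂ × ℂ) =>
      (‖p.2.1 + (p.1 : ℂ) * p.2.2.1‖, ‖p.2.2.2‖) := by
      apply Continuous.measurable; fun_prop
    exact (measurable_measure_prodMk_right (hm (measurableSet_eq_fun measurable_fst measurable_snd))).aemeasurable

lemma rw_triple_ae (A B C : Measure ℂ) (hA : RWGood A) (hB : RWGood B) (hC : RWGood C) :
    ∀ᵐ t ∂(A.prod (B.prod C)), t.1 ≠ 0 ∧ t.2.1 ≠ 0 ∧ t.2.2 ≠ 0 := by
  have := hA.prob
  have := hB.prob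
  have := hC.prob
  have h1 := (Measure.quasiMeasurePreserving_fst (μ := A) (ν := B.prod C)).ae hA.ae
  have h2 := ((Measure.quasiMeasurePreserving_fst (μ := B) (ν := C)).comp
      (Measure.quasiMeasurePreserving_snd (μ := A) (ν := B.prod C))).ae hB.ae
  have h3 := ((Measure.quasiMeasurePreserving_snd (μ := B) (ν := C)).comp
      (Measure.quasiMeasurePreserving_snd (μ := A) (ν := B.prod C))).ae hC.ae
  filter_upwards [h1, h2, h3] with t h1 h2 h3
  exact ⟨h1, h2, h3⟩

lemma rw_lt (A B C : Measure ℂ) (hA : RWGood A) (hB : RWGood B) (hC : RWGood C) :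
    (A.prod (B.prod C)) {t | ‖t.1 + t.2.1‖ < ‖t.2.2‖}
      = ∫⁻ t, ENNReal.ofReal (rwG ‖t.1‖ ‖t.2.1‖ ‖t.2.2‖ / Real.pi) ∂(A.prod (B.prod C)) := by
  have := hA.prob
  have := hB.prob
  have := hC.prob
  rw [rw_avg A B C hB (fun a b => a < b) (measurableSet_lt measurable_fst measurable_snd)]
  apply lintegral_congr_ae
  filter_upwards [rw_triple_ae A B C hA hB hC] with t ht
  exact rwK_lt _ _ _ ht.1 ht.2.1 (norm_pos_iff.2 ht.2.2)

lemma rwG_meas : Measurable fun t : ℂ × ℂ × ℂ =>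
    ENNReal.ofReal (rwG ‖t.1‖ ‖t.2.1‖ ‖t.2.2‖ / Real.pi) := by
  unfold rwG
  apply ENNReal.measurable_ofReal.comp
  apply Measurable.div_const
  apply Real.continuous_arccos.measurable.comp
  fun_prop

lemma rw_cyc (A B C : Measure ℂ) [IsProbabilityMeasure A] [IsProbabilityMeasure B]
    [IsProbabilityMeasure C] :
    MeasurePreserving (fun t : ℂ × ℂ × ℂ => (t.2.1, t.2.2, t.1)) (A.prod (B.prod C))
      (B.prod (C.prod A)) :=
  (measurePreserving_prodAssoc B C A).comp (Measure.measurePreserving_swap)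

lemma rw_sum (A B C : Measure ℂ) (hA : RWGood A) (hB : RWGood B) (hC : RWGood C) :
    (A.prod (B.prod C)) {t | ‖t.1 + t.2.1‖ < ‖t.2.2‖}
    + (B.prod (C.prod A)) {t | ‖t.1 + t.2.1‖ < ‖t.2.2‖}
    + (C.prod (A.prod B)) {t | ‖t.1 + t.2.1‖ < ‖t.2.2‖} = 1 := by
  have := hA.prob
  have := hB.prob
  have := hC.prob
  rw [rw_lt A B C hA hB hC, rw_lt B C A hB hC hA, rw_lt C A B hC hA hB]
  have c1 := rw_cyc A B C
  have c2 := (rw_cyc B C A).comp c1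
  rw [← c1.lintegral_comp rwG_meas, ← c2.lintegral_comp rwG_meas,
    ← lintegral_add_left rwG_meas, ← lintegral_add_left]
  · rw [lintegral_congr_ae (g := fun _ => 1)]
    · simp
    filter_upwards [rw_triple_ae A B C hA hB hC] with t ht
    simp only [Function.comp]
    have hp := Real.pi_pos
    have nn : ∀ a b c, 0 ≤ rwG a b c / Real.pi := fun a b c =>
      div_nonneg (Real.arccos_nonneg _) hp.le
    rw [← ENNReal.ofReal_add (nn _ _ _) (nn _ _ _), ← ENNReal.ofReal_add (add_nonneg (nn _ _ _) (nn _ _ _)) (nn _ _ _),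
      ← add_div, ← add_div,
      rwG_sum _ _ _ (norm_pos_iff.2 ht.1) (norm_pos_iff.2 ht.2.1) (norm_pos_iff.2 ht.2.2),
      div_self hp.ne', ENNReal.ofReal_one]
  · exact rwG_meas.add (rwG_meas.comp c1.measurable)

noncomputable def rwNu (μ : Measure ℝ) : Measure ℂ :=
  Measure.map (fun p : ℝ × Circle => (p.1 : ℂ) * (p.2 : ℂ)) (μ.prod rwK)

lemma rw_mphi : Measurable (fun p : ℝ × Circle => (p.1 : ℂ) * (p.2 : ℂ)) := by
  apply Continuous.measurable; fun_prop

instance (μ : Measure ℝ) [IsProbabilityMeasure μ] : IsProbabilityMeasure (rwNu μ) :=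
  Measure.isProbabilityMeasure_map rw_mphi.aemeasurable

noncomputable def rwW (μ : Measure ℝ) : ℕ → Measure ℂ
  | 0 => Measure.dirac 0
  | n + 1 => (rwNu μ).conv (rwW μ n)

instance rwW_prob (μ : Measure ℝ) [IsProbabilityMeasure μ] (n : ℕ) :
    IsProbabilityMeasure (rwW μ n) := by
  induction n with
  | zero => unfold rwW; infer_instance
  | succ n ih =>
    unfold rwW
    exact Measure.isProbabilityMeasure_map (by fun_prop)

lemma rwW_add (μ : Measure ℝ) [IsProbabilityMeasure μ] (i j : ℕ) :
    rwW μ (i + j) = (rwW μ i).conv (rwW μ j) := by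
  induction i with
  | zero => rw [zero_add, rwW, Measure.dirac_zero_conv]
  | succ i ih =>
    rw [show i + 1 + j = (i + j) + 1 by ring, rwW, rwW, ih, Measure.conv_assoc]

lemma rwW_one (μ : Measure ℝ) [IsProbabilityMeasure μ] : rwW μ 1 = rwNu μ := by
  rw [rwW, rwW, Measure.conv_dirac_zero]

lemma rwNu_good (μ : Measure ℝ) [IsProbabilityMeasure μ] (hμ : ∀ᵐ x ∂μ, 0 < x) :
    RWGood (rwNu μ) := by
  refine ⟨inferInstance, fun u => ⟨by fun_prop, ?_⟩, ?_⟩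
  · have mp := (MeasurePreserving.id μ).prod
      (⟨by fun_prop, rwK_inv u⟩ : MeasurePreserving (fun v : Circle => u * v) rwK rwK)
    unfold rwNu
    conv_rhs => rw [← mp.map_eq]
    rw [Measure.map_map (by fun_prop) rw_mphi, Measure.map_map rw_mphi mp.measurable]
    congr 1
    ext p
    simp [mul_left_comm]
  · rw [rwNu, Measure.map_apply rw_mphi (measurableSet_singleton 0)]
    have h1 := (Measure.quasiMeasurePreserving_fst (μ := μ) (ν := rwK)).ae hμ
    rw [ae_iff] at h1
    refine measure_mono_null ?_ h1
    intro p hp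
    simp only [Set.mem_preimage, Set.mem_singleton_iff, mul_eq_zero, Circle.coe_ne_zero, or_false,
      Complex.ofReal_eq_zero] at hp
    simp [hp]

lemma rw_conv_apply (A B C : Measure ℂ) [IsProbabilityMeasure A] [IsProbabilityMeasure B]
    [IsProbabilityMeasure C] (R : ℝ → ℝ → Prop) (hR : MeasurableSet {p : ℝ × ℝ | R p.1 p.2}) :
    (C.prod (A.conv B)) {p | R ‖p.2‖ ‖p.1‖}
      = (A.prod (B.prod C)) {t | R ‖t.1 + t.2.1‖ ‖t.2.2‖} := by
  have mp0 : MeasurePreserving (fun p : ℂ × ℂ => p.1 + p.2) (A.prod B) (A.conv B) :=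
    ⟨by fun_prop, rfl⟩
  have : IsProbabilityMeasure (A.conv B) := Measure.isProbabilityMeasure_map (by fun_prop)
  have mp := ((MeasurePreserving.id C).prod mp0).comp ((rw_cyc B C A).comp (rw_cyc A B C))
  have hm : Measurable fun p : ℂ × ℂ => (‖p.2‖, ‖p.1‖) := by fun_prop
  exact (mp.measure_preimage (hm hR).nullMeasurableSet).symm

lemma rw_conv_tie (A B C : Measure ℂ) (hA : RWGood A) (hB : RWGood B) [IsProbabilityMeasure C] :
    (C.prod (A.conv B)) {p | ‖p.2‖ = ‖p.1‖} = 0 := by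
  have := hA.prob
  have := hB.prob
  rw [rw_conv_apply A B C (fun a b => a = b) (measurableSet_eq_fun measurable_fst measurable_snd)]
  exact rw_tie A B C hA hB

lemma rw_conv_good (A B : Measure ℂ) (hA : RWGood A) (hB : RWGood B) : RWGood (A.conv B) := by
  have := hA.prob
  have := hB.prob
  have hp : IsProbabilityMeasure (A.conv B) := Measure.isProbabilityMeasure_map (by fun_prop)
  refine ⟨hp, fun u => ⟨by fun_prop, ?_⟩, ?_⟩
  · have mp := (hA.inv u).prod (hB.inv u)
    unfold Measure.conv
    conv_rhs => rw [← mp.map_eq]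
    rw [Measure.map_map (by fun_prop) (by fun_prop), Measure.map_map (by fun_prop) mp.measurable]
    congr 1
    ext p
    simp [mul_add]
  · have h := rw_conv_tie A B (Measure.dirac 0) hA hB
    have e : ({(0:ℂ)} ×ˢ {(0:ℂ)} : Set (ℂ × ℂ)) ⊆ {p | ‖p.2‖ = ‖p.1‖} := by
      rintro ⟨a, b⟩ ⟨h1, h2⟩
      simp only [Set.mem_singleton_iff] at h1 h2
      simp [h1, h2]
    have := measure_mono_null e h
    rw [Measure.prod_prod] at this
    simpa using this

lemma rwW_good (μ : Measure ℝ) [IsProbabilityMeasure μ] (hμ : ∀ᵐ x ∂μ, 0 < x) (n : ℕ)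
    (hn : 1 ≤ n) : RWGood (rwW μ n) := by
  induction n, hn using Nat.le_induction with
  | base => rw [rwW_one]; exact rwNu_good μ hμ
  | succ n hn ih => rw [rwW]; exact rw_conv_good _ _ (rwNu_good μ hμ) ih

noncomputable def rwF (μ : Measure ℝ) (k l : ℕ) : ℝ≥0∞ :=
  ((rwW μ k).prod (rwW μ l)) {p | ‖p.2‖ < ‖p.1‖}

lemma rwF_three (μ : Measure ℝ) [IsProbabilityMeasure μ] (hμ : ∀ᵐ x ∂μ, 0 < x) (i j k : ℕ)
    (hi : 1 ≤ i) (hj : 1 ≤ j) (hk : 1 ≤ k) :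
    rwF μ k (i + j) + rwF μ i (j + k) + rwF μ j (k + i) = 1 := by
  have hR : MeasurableSet {p : ℝ × ℝ | p.1 < p.2} := measurableSet_lt measurable_fst measurable_snd
  unfold rwF
  rw [rwW_add, rwW_add, rwW_add, rw_conv_apply _ _ _ (fun a b => a < b) hR,
    rw_conv_apply _ _ _ (fun a b => a < b) hR, rw_conv_apply _ _ _ (fun a b => a < b) hR]
  exact rw_sum _ _ _ (rwW_good μ hμ i hi) (rwW_good μ hμ j hj) (rwW_good μ hμ k hk)

lemma rwF_two' (μ : Measure ℝ) [IsProbabilityMeasure μ] (hμ : ∀ᵐ x ∂μ, 0 < x) (k l : ℕ)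
    (hl : 2 ≤ l) : rwF μ k l + rwF μ l k = 1 := by
  have tie : ((rwW μ k).prod (rwW μ l)) {p | ‖p.2‖ = ‖p.1‖} = 0 := by
    obtain ⟨j, rfl⟩ : ∃ j, l = 1 + j := ⟨l - 1, by omega⟩
    rw [rwW_add]
    exact rw_conv_tie _ _ _ (rwW_good μ hμ 1 le_rfl) (rwW_good μ hμ j (by omega))
  have hm1 : Measurable fun p : ℂ × ℂ => ‖p.1‖ := by fun_prop
  have hm2 : Measurable fun p : ℂ × ℂ => ‖p.2‖ := by fun_prop
  have sw : rwF μ l k = ((rwW μ k).prod (rwW μ l)) {p | ‖p.1‖ < ‖p.2‖} :=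
    ((Measure.measurePreserving_swap (μ := rwW μ k) (ν := rwW μ l)).measure_preimage
      (measurableSet_lt hm2 hm1).nullMeasurableSet).symm
  have h2 : ((rwW μ k).prod (rwW μ l)) {p | ‖p.1‖ < ‖p.2‖}
      = ((rwW μ k).prod (rwW μ l)) {p | ‖p.2‖ < ‖p.1‖}ᶜ := by
    apply measure_congr
    have : ∀ᵐ p ∂((rwW μ k).prod (rwW μ l)), ‖p.2‖ ≠ ‖p.1‖ := by
      rw [ae_iff]; simpa using tie
    refine Filter.eventuallyEq_set.2 ?_
    filter_upwards [this] with p hp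
    simp only [Set.mem_ofPred_eq, Set.mem_compl_iff, not_lt]
    exact ⟨fun h => h.le, fun h => lt_of_le_of_ne h hp.symm⟩
  rw [sw, h2, rwF, measure_add_measure_compl (measurableSet_lt hm2 hm1), measure_univ]

lemma rwF_two (μ : Measure ℝ) [IsProbabilityMeasure μ] (hμ : ∀ᵐ x ∂μ, 0 < x) (k l : ℕ)
    (hl : 2 < k + l) : rwF μ k l + rwF μ l k = 1 := by
  rcases le_or_gt 2 l with h | h
  · exact rwF_two' μ hμ k l h
  · rw [add_comm]; exact rwF_two' μ hμ l k (by omega)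

lemma rwF_zero (μ : Measure ℝ) [IsProbabilityMeasure μ] (l : ℕ) : rwF μ 0 l = 0 := by
  have e : {p : ℂ × ℂ | ‖p.2‖ < ‖p.1‖} ⊆ ({0}ᶜ : Set ℂ) ×ˢ Set.univ := by
    rintro ⟨a, b⟩ h
    simp only [Set.mem_ofPred_eq] at h
    have : a ≠ 0 := norm_pos_iff.1 (lt_of_le_of_lt (norm_nonneg b) h)
    simpa using this
  refine measure_mono_null e ?_
  rw [Measure.prod_prod, rwW]
  simp

lemma rwF_val (μ : Measure ℝ) [IsProbabilityMeasure μ] (hμ : ∀ᵐ x ∂μ, 0 < x) (m n : ℕ)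
    (hmn : 2 < m + n) : rwF μ m n = (m : ℝ≥0∞) / (m + n) := by
  have ft : ∀ k l, rwF μ k l ≠ ∞ := fun k l => measure_ne_top _ _
  set N := m + n with hN
  let f : ℕ → ℝ := fun k => (rwF μ k (N - k)).toReal
  have f2 : ∀ k, k ≤ N → f k + f (N - k) = 1 := by
    intro k hk
    have := rwF_two μ hμ k (N - k) (by omega)
    have h := congrArg ENNReal.toReal this
    rw [ENNReal.toReal_add (ft _ _) (ft _ _), ENNReal.toReal_one] at h
    simp only [f]
    rw [show N - (N - k) = k by omega]
    exact h
  have f3 : ∀ i, 1 ≤ i → i + 1 < N → f i + f 1 + f (N - (i+1)) = 1 := by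
    intro i hi hk
    have := rwF_three μ hμ i 1 (N - (i+1)) hi le_rfl (by omega)
    have h := congrArg ENNReal.toReal this
    rw [ENNReal.toReal_add (by simp [ft]) (ft _ _), ENNReal.toReal_add (ft _ _) (ft _ _),
      ENNReal.toReal_one] at h
    simp only [f]
    rw [show N - (N - (i+1)) = i + 1 by omega, show N - i = 1 + (N - (i+1)) by omega,
      show N - 1 = N - (i + 1) + i by omega]
    linarith
  have lin : ∀ i, 1 ≤ i → i < N → f i = i * f 1 := by
    intro i hi
    induction i, hi using Nat.le_induction with
    | base => intro _; simp
    | succ i hi ih =>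
      intro h
      have a := f3 i hi h
      have b := f2 (i+1) h.le
      have c := ih (by omega)
      push_cast
      linarith
  have hNr : (0:ℝ) < N := by exact_mod_cast (by omega : 0 < N)
  have f1 : f 1 = 1 / N := by
    have a := f2 1 (by omega)
    have b := lin (N - 1) (by omega) (by omega)
    rw [Nat.cast_sub (by omega)] at b
    rw [eq_div_iff hNr.ne']
    push_cast at b
    linarith
  have f0 : f 0 = 0 := by simp [f, rwF_zero]
  have fm : f m = m / N := by
    rcases Nat.eq_zero_or_pos m with h | h
    · rw [h, f0]; simp
    rcases Nat.lt_or_ge m N with h' | h'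
    · rw [lin m h h', f1]; ring
    · have e : m = N := by omega
      have := f2 0 (by omega)
      rw [f0, Nat.sub_zero] at this
      rw [e, div_self hNr.ne']; linarith
  have e : N - m = n := by omega
  have fm' : (rwF μ m n).toReal = m / N := by rw [← fm]; simp only [f, e]
  rw [← ENNReal.ofReal_toReal (ft m n), fm', ENNReal.ofReal_div_of_pos hNr,
    ENNReal.ofReal_natCast, ENNReal.ofReal_natCast, hN]
  push_cast
  rfl

lemma rw_pi_sum (ν : Measure ℂ) [IsProbabilityMeasure ν] (μ : Measure ℝ) (hν : rwNu μ = ν) (n : ℕ) :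
    Measure.map (fun f : Fin n → ℂ => ∑ i, f i) (Measure.pi fun _ => ν) = rwW μ n := by
  induction n with
  | zero =>
    simp only [Finset.univ_eq_empty, Finset.sum_empty]
    rw [rwW, Measure.map_const, measure_univ, one_smul]
  | succ n ih =>
    have mp := measurePreserving_piFinSuccAbove (fun _ : Fin (n+1) => ν) 0
    rw [rwW, hν, ← ih, Measure.conv]
    have hs : Measurable fun f : Fin n → ℂ => ∑ i, f i := by fun_prop
    have mp2 := (MeasurePreserving.id ν).prod
      (⟨hs, rfl⟩ : MeasurePreserving (fun f : Fin n → ℂ => ∑ i, f i) (Measure.pi fun _ => ν) _)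
    rw [← mp2.map_eq, ← mp.map_eq, Measure.map_map mp2.measurable mp.measurable,
      Measure.map_map (by fun_prop) (mp2.measurable.comp mp.measurable)]
    congr 1
    ext f
    simp [Fin.sum_univ_succ, MeasurableEquiv.piFinSuccAbove, Fin.tail]

noncomputable def rwJ (u : Circle) : EuclideanSpace ℝ (Fin 2) :=
  Complex.orthonormalBasisOneI.repr (u : ℂ)

lemma rwJ_meas : Measurable rwJ := by
  unfold rwJ
  apply Continuous.measurable
  fun_prop

lemma uniformCircle_eq : uniformCircle = Measure.map rwJ rwK := by
  rw [rwK_eq 0, zero_add, Measure.map_map rwJ_meas Circle.exp.continuous.measurable, uniformCircle]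
  congr 1
  ext θ i
  have h := Complex.orthonormalBasisOneI_repr_apply (Circle.exp θ : ℂ)
  simp only [Function.comp, rwJ, stepVec]
  rw [h]
  fin_cases i <;> simp [Circle.coe_exp, Complex.exp_ofReal_mul_I_re, Complex.exp_ofReal_mul_I_im]

lemma walkDist_eq (μ : Measure ℝ) [IsProbabilityMeasure μ] (n : ℕ) :
    walkDist μ n = Measure.map (fun z : ℂ => ‖z‖) (rwW μ n) := by
  have hJ : IsProbabilityMeasure (Measure.map rwJ rwK) :=
    Measure.isProbabilityMeasure_map rwJ_meas.aemeasurable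
  have mJ : MeasurePreserving (fun (f : Fin n → Circle) i => rwJ (f i))
      (Measure.pi fun _ => rwK) (Measure.pi fun _ => uniformCircle) := by
    rw [uniformCircle_eq]
    exact measurePreserving_pi _ _ fun _ => ⟨rwJ_meas, rfl⟩
  have mphi : MeasurePreserving (fun (f : Fin n → ℝ × Circle) i => ((f i).1 : ℂ) * ((f i).2 : ℂ))
      (Measure.pi fun _ => μ.prod rwK) (Measure.pi fun _ => rwNu μ) :=
    measurePreserving_pi _ _ fun _ => ⟨rw_mphi, rfl⟩
  have mA := measurePreserving_arrowProdEquivProdArrow ℝ Circle (Fin n) (fun _ => μ) (fun _ => rwK)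
  have : IsProbabilityMeasure uniformCircle := by rw [uniformCircle_eq]; exact hJ
  have mp := ((MeasurePreserving.id (Measure.pi fun _ : Fin n => μ)).prod mJ).comp mA
  rw [walkDist, ← mp.map_eq, Measure.map_map (by fun_prop) mp.measurable,
    ← rw_pi_sum (rwNu μ) μ rfl n, ← mphi.map_eq, Measure.map_map (by fun_prop) mphi.measurable,
    Measure.map_map (by fun_prop) (by fun_prop)]
  congr 1
  ext f
  simp only [Function.comp]
  rw [← LinearIsometryEquiv.norm_map Complex.orthonormalBasisOneI.repr, map_sum]
  congr 1
  apply Finset.sum_congr rfl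
  intro i _
  rw [← Complex.real_smul, map_smul]
  rfl

theorem stmt_0 {Ω : Type*} [MeasurableSpace Ω] (P : Measure Ω) [IsProbabilityMeasure P]
    (X : Ω → ℝ) (hX : Measurable X) (hXpos : ∀ ω, 0 < X ω)
    (m n : ℕ) (hmn : 2 < m + n)
    (Dm Dn : Ω → ℝ) (hDm : Measurable Dm) (hDn : Measurable Dn)
    (hind : IndepFun Dm Dn P)
    (hDmlaw : Measure.map Dm P = walkDist (Measure.map X P) m)
    (hDnlaw : Measure.map Dn P = walkDist (Measure.map X P) n) :
    P {ω | Dn ω < Dm ω} = (m : ℝ≥0∞) / (m + n) := by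
  have hp : IsProbabilityMeasure (Measure.map X P) :=
    Measure.isProbabilityMeasure_map hX.aemeasurable
  have hpos : ∀ᵐ x ∂(Measure.map X P), 0 < x := by
    rw [ae_map_iff hX.aemeasurable measurableSet_Ioi]
    exact Filter.Eventually.of_forall hXpos
  have hl := (indepFun_iff_map_prod_eq_prod_map_map hDm.aemeasurable hDn.aemeasurable).1 hind
  have hS : MeasurableSet {p : ℝ × ℝ | p.2 < p.1} := measurableSet_lt measurable_snd measurable_fst
  have h1 : P {ω | Dn ω < Dm ω} = (Measure.map (fun ω => (Dm ω, Dn ω)) P) {p | p.2 < p.1} := by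
    rw [Measure.map_apply (by fun_prop) hS]; rfl
  rw [h1, hl, hDmlaw, hDnlaw, walkDist_eq, walkDist_eq,
    Measure.map_prod_map _ _ (by fun_prop) (by fun_prop), Measure.map_apply (by fun_prop) hS,
    ← rwF_val (Measure.map X P) hpos m n hmn]
  rfl
end

section
/- (Rayleigh's theorem) Let n > 1 be an integer and consider a planar random walk of n unit steps with directions chosen independently and uniformly at random. The probability that the walk ends at distance strictly less than 1 from its starting point is 1/(n+1). Equivalently, Pr(n⊙1 < 1) = 1/(n+1), where n⊙1 = ‖U₁ + ⋯ + Uₙ‖ for independent random unit vectors U₁,…,Uₙ uniformly distributed on the unit circle of ℝ². -/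
open MeasureTheory ProbabilityTheory
open scoped ENNReal

namespace Rayleigh

/-- Uniform law on the circle in `ℂ`. -/
noncomputable def cm : Measure ℂ :=
  Measure.map (fun θ : ℝ => Complex.exp (θ * Complex.I))
    ((ENNReal.ofReal (2 * Real.pi))⁻¹ • volume.restrict (Set.Ioc 0 (2 * Real.pi)))

lemma meas_exp : Measurable (fun θ : ℝ => Complex.exp (θ * Complex.I)) :=
  (by fun_prop : Continuous (fun θ : ℝ => Complex.exp (θ * Complex.I))).measurable

instance base_prob : IsProbabilityMeasure
    ((ENNReal.ofReal (2 * Real.pi))⁻¹ • (volume : Measure ℝ).restrict (Set.Ioc 0 (2 * Real.pi))) := by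
  constructor
  simp only [Measure.smul_apply, Measure.restrict_apply MeasurableSet.univ, Set.univ_inter,
    Real.volume_Ioc, sub_zero, smul_eq_mul]
  apply ENNReal.inv_mul_cancel
  · simp [Real.pi_pos]
  · exact ENNReal.ofReal_ne_top

instance cm_prob : IsProbabilityMeasure cm :=
  Measure.isProbabilityMeasure_map meas_exp.aemeasurable

instance fact_pi : Fact (0 < 2 * Real.pi) := ⟨Real.two_pi_pos⟩

lemma toC (x : ℝ) : ((AddCircle.toCircle (x : AddCircle (2 * Real.pi)) : Circle) : ℂ)
    = Complex.exp (x * Complex.I) := by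
  rw [AddCircle.toCircle_apply_mk, div_self Real.two_pi_pos.ne', one_mul, Circle.coe_exp]

lemma lint_cm_add (F : ℂ → ℝ≥0∞) (hF : Measurable F) :
    ∫⁻ u, F u ∂cm = (ENNReal.ofReal (2 * Real.pi))⁻¹ *
      ∫⁻ x : AddCircle (2 * Real.pi), F (AddCircle.toCircle x) := by
  rw [cm, lintegral_map hF meas_exp, lintegral_smul_measure,
    ← AddCircle.lintegral_preimage (2 * Real.pi) 0 (fun x => F (AddCircle.toCircle x))]
  simp only [toC, zero_add, smul_eq_mul]

lemma lint_cm (t : ℝ) (F : ℂ → ℝ≥0∞) (hF : Measurable F) :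
    ∫⁻ u, F u ∂cm = (ENNReal.ofReal (2 * Real.pi))⁻¹ *
      ∫⁻ θ in Set.Ioc t (t + 2 * Real.pi), F (Complex.exp (θ * Complex.I)) := by
  rw [lint_cm_add F hF,
    ← AddCircle.lintegral_preimage (2 * Real.pi) t (fun x => F (AddCircle.toCircle x))]
  simp only [toC]

lemma cm_norm : ∀ᵐ u ∂cm, ‖u‖ = 1 := by
  rw [cm, ae_map_iff meas_exp.aemeasurable (measurableSet_eq_fun (by fun_prop) (by fun_prop))]
  exact Filter.Eventually.of_forall fun θ => Complex.norm_exp_ofReal_mul_I θ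

/-- rotation invariance -/
def RotInv (μ : Measure ℂ) : Prop :=
  ∀ w : ℂ, ‖w‖ = 1 → ∀ F : ℂ → ℝ≥0∞, Measurable F → ∫⁻ x, F (w * x) ∂μ = ∫⁻ x, F x ∂μ

lemma cm_rot : RotInv cm := by
  intro w hw F hF
  obtain ⟨α, rfl⟩ := (Complex.norm_eq_one_iff w).1 hw
  rw [lint_cm_add F hF, lint_cm_add (fun x => F (_ * x)) (by fun_prop)]
  congr 1
  rw [← lintegral_add_left_eq_self (fun x => F (AddCircle.toCircle x)) (α : AddCircle (2 * Real.pi))]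
  congr 1
  ext x
  rw [AddCircle.toCircle_add, Circle.coe_mul, toC]

lemma conv_rot {μ ρ : Measure ℂ} [SFinite ρ] (h : RotInv μ) (h' : RotInv ρ) : RotInv (μ ∗ ρ) := by
  intro w hw F hF
  rw [Measure.lintegral_conv hF, Measure.lintegral_conv (f := fun x => F (w * x)) (by fun_prop)]
  simp only [mul_add]
  rw [← h w hw (fun x => ∫⁻ y, F (x + y) ∂ρ) (Measurable.lintegral_prod_right' (f := fun p : ℂ × ℂ => F (p.1 + p.2)) (by fun_prop))]
  congr 1
  ext x
  exact h' w hw (fun y => F (w * x + y)) (by fun_prop)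

lemma avg {μ : Measure ℂ} [SFinite μ] (h : RotInv μ) (F : ℂ → ℝ≥0∞) (hF : Measurable F) :
    ∫⁻ x, F x ∂μ = ∫⁻ x, ∫⁻ u, F (u * x) ∂cm ∂μ := by
  rw [lintegral_lintegral_swap (by unfold Function.uncurry; fun_prop)]
  have : ∫⁻ u, ∫⁻ x, F (u * x) ∂μ ∂cm = ∫⁻ u, ∫⁻ x, F x ∂μ ∂cm := by
    apply lintegral_congr_ae
    filter_upwards [cm_norm] with u hu using h u hu F hF
  rw [this]; simp

lemma cm_re_gt (s : ℝ) : cm {u | s < u.re} = ENNReal.ofReal (Real.arccos s / Real.pi) := by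
  have hm : MeasurableSet {u : ℂ | s < u.re} := measurableSet_lt (by fun_prop) (by fun_prop)
  rw [← lintegral_indicator_one hm, lint_cm (-Real.pi) _ (measurable_one.indicator hm)]
  have e : ∀ θ : ℝ, ({u : ℂ | s < u.re}.indicator 1 (Complex.exp (θ * Complex.I)) : ℝ≥0∞)
      = {θ : ℝ | s < Real.cos θ}.indicator 1 θ := by
    intro θ; simp [Set.indicator, Complex.exp_ofReal_mul_I_re]
  have hm' : MeasurableSet {θ : ℝ | s < Real.cos θ} := measurableSet_lt (by fun_prop) (by fun_prop)
  simp only [e]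
  rw [lintegral_indicator_one hm', Measure.restrict_apply hm']
  have h0 := Real.arccos_nonneg s
  have h1 := Real.arccos_le_pi s
  have hp := Real.pi_pos
  have key : volume ({θ : ℝ | s < Real.cos θ} ∩ Set.Ioc (-Real.pi) (-Real.pi + 2 * Real.pi))
      = ENNReal.ofReal (2 * Real.arccos s) := by
    apply le_antisymm
    · have : {θ : ℝ | s < Real.cos θ} ∩ Set.Ioc (-Real.pi) (-Real.pi + 2 * Real.pi)
          ⊆ Set.Icc (-Real.arccos s) (Real.arccos s) := by
        rintro θ ⟨h, h2, h3⟩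
        simp only [Set.mem_ofPred_eq] at h
        have : |θ| ≤ Real.pi := abs_le.2 ⟨by linarith, by linarith⟩
        have h4 : |θ| = Real.arccos (Real.cos θ) := by
          rw [← Real.cos_abs, Real.arccos_cos (abs_nonneg _) this]
        have : |θ| ≤ Real.arccos s := by rw [h4]; exact Real.antitone_arccos h.le
        exact abs_le.1 this
      refine (measure_mono this).trans (le_of_eq ?_)
      rw [Real.volume_Icc]; congr 1; ring
    · have : Set.Ioo (-Real.arccos s) (Real.arccos s) ⊆
        {θ : ℝ | s < Real.cos θ} ∩ Set.Ioc (-Real.pi) (-Real.pi + 2 * Real.pi) := by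
        rintro θ ⟨h2, h3⟩
        refine ⟨?_, by linarith, by linarith⟩
        simp only [Set.mem_ofPred_eq]
        have h4 : |θ| < Real.arccos s := abs_lt.2 ⟨h2, h3⟩
        by_contra hc
        push Not at hc
        have h5 := Real.antitone_arccos hc
        rw [← Real.cos_abs, Real.arccos_cos (abs_nonneg _) (h4.le.trans h1)] at h5
        linarith
      refine le_trans (le_of_eq ?_) (measure_mono this)
      rw [Real.volume_Ioo]; congr 1; ring
  rw [key, ← ENNReal.ofReal_inv_of_pos (by positivity), ← ENNReal.ofReal_mul (by positivity)]
  congr 1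
  field_simp

lemma cm_re_eq (s : ℝ) : cm {u | u.re = s} = 0 := by
  have hm : MeasurableSet {u : ℂ | u.re = s} := measurableSet_eq_fun (by fun_prop) (by fun_prop)
  rw [← lintegral_indicator_one hm, lint_cm (-Real.pi) _ (measurable_one.indicator hm)]
  have e : ∀ θ : ℝ, ({u : ℂ | u.re = s}.indicator 1 (Complex.exp (θ * Complex.I)) : ℝ≥0∞)
      = {θ : ℝ | Real.cos θ = s}.indicator 1 θ := by
    intro θ; simp [Set.indicator, Complex.exp_ofReal_mul_I_re]
  have hm' : MeasurableSet {θ : ℝ | Real.cos θ = s} := measurableSet_eq_fun (by fun_prop) (by fun_prop)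
  simp only [e]
  rw [lintegral_indicator_one hm', Measure.restrict_apply hm']
  have hp := Real.pi_pos
  have : {θ : ℝ | Real.cos θ = s} ∩ Set.Ioc (-Real.pi) (-Real.pi + 2 * Real.pi)
      ⊆ {Real.arccos s, -Real.arccos s} := by
    rintro θ ⟨h, h2, h3⟩
    simp only [Set.mem_ofPred_eq] at h
    have : |θ| ≤ Real.pi := abs_le.2 ⟨by linarith, by linarith⟩
    have h4 : |θ| = Real.arccos s := by
      rw [← h, ← Real.cos_abs, Real.arccos_cos (abs_nonneg _) this]
    rcases abs_choice θ with h | h <;> simp <;> grind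
  rw [measure_mono_null this ((Set.toFinite _).measure_zero _), mul_zero]

lemma cm_single (x : ℂ) : cm {x} = 0 :=
  measure_mono_null (t := {u : ℂ | u.re = x.re}) (by simp) (cm_re_eq _)

/-- cosine of the angle opposite to `c`, clamped by `arccos` -/
noncomputable def ang (a b c : ℝ) : ℝ := Real.arccos ((a ^ 2 + b ^ 2 - c ^ 2) / (2 * a * b))

lemma ang_far {a b c : ℝ} (ha : 0 < a) (hb : 0 < b) (hc : 0 < c) (h : a + b ≤ c) :
    ang a b c + ang b c a + ang c a b = Real.pi := by
  have h1 : ang a b c = Real.pi := by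
    apply Real.arccos_of_le_neg_one
    rw [div_le_iff₀ (by positivity)]; nlinarith
  have h2 : ang b c a = 0 := by
    apply Real.arccos_of_one_le
    rw [le_div_iff₀ (by positivity)]; nlinarith
  have h3 : ang c a b = 0 := by
    apply Real.arccos_of_one_le
    rw [le_div_iff₀ (by positivity)]; nlinarith
  rw [h1, h2, h3]; ring

lemma angle_eq_ang (x y : ℂ) : InnerProductGeometry.angle x y = ang ‖x‖ ‖y‖ ‖x - y‖ := by
  unfold InnerProductGeometry.angle ang
  rw [real_inner_eq_norm_mul_self_add_norm_mul_self_sub_norm_sub_mul_self_div_two]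
  congr 1
  rw [div_div]; congr 1 <;> ring

lemma ang_comm (a b c : ℝ) : ang a b c = ang b a c := by
  unfold ang; congr 2 <;> ring

lemma ang_sum {a b c : ℝ} (ha : 0 < a) (hb : 0 < b) (hc : 0 < c) :
    ang a b c + ang b c a + ang c a b = Real.pi := by
  by_cases h1 : a + b ≤ c
  · exact ang_far ha hb hc h1
  by_cases h2 : b + c ≤ a
  · rw [← ang_far hb hc ha h2]; ring
  by_cases h3 : c + a ≤ b
  · rw [← ang_far hc ha hb h3]; ring
  push Not at h1 h2 h3
  set s := (a ^ 2 + b ^ 2 - c ^ 2) / (2 * a * b) with hs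
  have hs1 : -1 ≤ s := by rw [hs, le_div_iff₀ (by positivity)]; nlinarith
  have hs2 : s ≤ 1 := by rw [hs, div_le_iff₀ (by positivity)]; nlinarith
  set x : ℂ := (a : ℂ) with hx
  set y : ℂ := ⟨b * s, b * √(1 - s ^ 2)⟩ with hy
  have hq : √(1 - s ^ 2) ^ 2 = 1 - s ^ 2 := Real.sq_sqrt (by nlinarith)
  have nx : ‖x‖ = a := by simp [hx, abs_of_pos ha]
  have ny : ‖y‖ = b := by
    rw [← abs_of_pos hb, ← abs_norm, ← sq_eq_sq_iff_abs_eq_abs, ← Complex.normSq_eq_norm_sq,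
      Complex.normSq_apply]
    simp only [hy]
    linear_combination b ^ 2 * hq
  have nxy : ‖x - y‖ = c := by
    have : 2 * a * b * s = a ^ 2 + b ^ 2 - c ^ 2 := by rw [hs]; field_simp
    rw [← abs_of_pos hc, ← abs_norm, ← sq_eq_sq_iff_abs_eq_abs, ← Complex.normSq_eq_norm_sq,
      Complex.normSq_apply]
    simp only [hx, hy, Complex.sub_re, Complex.sub_im, Complex.ofReal_re, Complex.ofReal_im]
    linear_combination b ^ 2 * hq - this
  have hy0 : y ≠ 0 := by rw [← norm_pos_iff, ny]; exact hb
  have := InnerProductGeometry.angle_add_angle_sub_add_angle_sub_eq_pi x hy0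
  rw [angle_eq_ang, angle_eq_ang, angle_eq_ang, sub_sub_cancel, sub_sub_cancel, norm_sub_rev y x,
    nx, ny, nxy] at this
  rw [← this, ang_comm c a b]; ring

lemma norm_expand (a b : ℝ) (u : ℂ) (hu : ‖u‖ = 1) :
    ‖(a : ℂ) + -u * b‖ ^ 2 = a ^ 2 + b ^ 2 - 2 * a * b * u.re := by
  have : ‖u‖ ^ 2 = 1 := by rw [hu]; norm_num
  rw [← Complex.normSq_eq_norm_sq, Complex.normSq_apply] at *
  simp
  linear_combination b ^ 2 * this

lemma cm_rotate {a b : ℂ} (ha : a ≠ 0) (hb : b ≠ 0) (F : ℝ → ℝ≥0∞) (hF : Measurable F) :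
    ∫⁻ u, F ‖a + u * b‖ ∂cm = ∫⁻ u, F ‖((‖a‖ : ℝ) : ℂ) + -u * ((‖b‖ : ℝ) : ℂ)‖ ∂cm := by
  have ha' : ‖a‖ ≠ 0 := norm_ne_zero_iff.2 ha
  have hb' : ‖b‖ ≠ 0 := norm_ne_zero_iff.2 hb
  have ha2 : (‖a‖ : ℂ) ≠ 0 := by exact_mod_cast ha'
  rw [← cm_rot (-(a / ‖a‖ * (‖b‖ / b))) (by simp [ha', hb']) (fun u => F ‖a + u * b‖) (by fun_prop)]
  congr 1
  ext u
  congr 1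
  have : a + -(a / ‖a‖ * (‖b‖ / b)) * u * b = (a / ‖a‖) * ((‖a‖ : ℂ) + -u * (‖b‖ : ℂ)) := by
    field_simp
  rw [this, norm_mul]
  simp [ha']

lemma cm_tri {a b : ℂ} (ha : a ≠ 0) (hb : b ≠ 0) {c : ℝ} (hc : 0 < c) :
    cm {u | ‖a + u * b‖ < c} = ENNReal.ofReal (ang ‖a‖ ‖b‖ c / Real.pi) := by
  have ha' : 0 < ‖a‖ := norm_pos_iff.2 ha
  have hb' : 0 < ‖b‖ := norm_pos_iff.2 hb
  have hm : MeasurableSet {u : ℂ | ‖a + u * b‖ < c} := measurableSet_lt (by fun_prop) (by fun_prop)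
  rw [← lintegral_indicator_one hm]
  have := cm_rotate ha hb ((Set.Iio c).indicator 1) (measurable_one.indicator measurableSet_Iio)
  refine Eq.trans ?_ (this.trans ?_)
  · rfl
  unfold ang
  rw [← cm_re_gt, ← lintegral_indicator_one (measurableSet_lt (by fun_prop) (by fun_prop))]
  apply lintegral_congr_ae
  filter_upwards [cm_norm] with u hu
  have e := norm_expand ‖a‖ ‖b‖ u hu
  have : ‖((‖a‖ : ℝ) : ℂ) + -u * ((‖b‖ : ℝ) : ℂ)‖ < c ↔
      (‖a‖ ^ 2 + ‖b‖ ^ 2 - c ^ 2) / (2 * ‖a‖ * ‖b‖) < u.re := by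
    rw [div_lt_iff₀ (by positivity), ← sq_lt_sq₀ (norm_nonneg _) hc.le, e]
    constructor <;> intro h <;> linarith
  simp only [Set.indicator, Set.mem_Iio, Set.mem_ofPred_eq, this, Pi.one_apply]

lemma cm_tie {a b : ℂ} (ha : a ≠ 0) (hb : b ≠ 0) {c : ℝ} :
    cm {u | ‖a + u * b‖ = c} = 0 := by
  have ha' : 0 < ‖a‖ := norm_pos_iff.2 ha
  have hb' : 0 < ‖b‖ := norm_pos_iff.2 hb
  have hm : MeasurableSet {u : ℂ | ‖a + u * b‖ = c} :=
    measurableSet_eq_fun (by fun_prop) (by fun_prop)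
  rw [← lintegral_indicator_one hm]
  have := cm_rotate ha hb (({c} : Set ℝ).indicator 1)
    (measurable_one.indicator (measurableSet_singleton c))
  refine Eq.trans ?_ (this.trans ?_)
  · rfl
  refine le_antisymm ?_ zero_le
  rw [← cm_re_eq ((‖a‖ ^ 2 + ‖b‖ ^ 2 - c ^ 2) / (2 * ‖a‖ * ‖b‖)),
    ← lintegral_indicator_one (measurableSet_eq_fun (by fun_prop) (by fun_prop))]
  apply lintegral_mono_ae
  filter_upwards [cm_norm] with u hu
  have e := norm_expand ‖a‖ ‖b‖ u hu
  have : ‖((‖a‖ : ℝ) : ℂ) + -u * ((‖b‖ : ℝ) : ℂ)‖ = c →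
      u.re = (‖a‖ ^ 2 + ‖b‖ ^ 2 - c ^ 2) / (2 * ‖a‖ * ‖b‖) := by
    intro h
    rw [h] at e
    rw [eq_div_iff (by positivity)]
    linarith
  simp only [Set.indicator, Set.mem_singleton_iff, Set.mem_ofPred_eq]
  split_ifs <;> simp_all

/-- law of the walk after `n` steps -/
noncomputable def W : ℕ → Measure ℂ
  | 0 => Measure.dirac 0
  | n + 1 => cm ∗ W n

instance W_prob : ∀ n, IsProbabilityMeasure (W n)
  | 0 => by unfold W; infer_instance
  | n + 1 => by
    have := W_prob n
    unfold W; infer_instance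

lemma W_rot (n : ℕ) : RotInv (W n) := by
  induction n with
  | zero =>
    intro w hw F hF
    simp [W]
  | succ n ih => exact conv_rot cm_rot ih

lemma W_one : W 1 = cm := by
  simp [W]

lemma W_add (m k : ℕ) : W (m + k) = W m ∗ W k := by
  induction m with
  | zero => simp [W]
  | succ m ih =>
    rw [show m + 1 + k = (m + k) + 1 by ring, W, W, ih, Measure.conv_assoc]

lemma conv_app (μ ρ : Measure ℂ) [SFinite ρ] {S : Set ℂ} (hS : MeasurableSet S) :
    (μ ∗ ρ) S = ∫⁻ x, ρ {y | x + y ∈ S} ∂μ := by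
  rw [← lintegral_indicator_one hS, Measure.lintegral_conv (measurable_one.indicator hS)]
  congr 1
  ext x
  rw [← lintegral_indicator_one]
  · rfl
  · exact (by fun_prop : Measurable (fun y : ℂ => x + y)) hS

lemma W_zero {n : ℕ} (hn : 1 ≤ n) : ∀ᵐ x ∂W n, x ≠ 0 := by
  obtain ⟨n, rfl⟩ := Nat.exists_eq_add_of_le' hn
  have : (W (n + 1)) {0} = 0 := by
    rw [W_add, W_one, conv_app _ _ (measurableSet_singleton _)]
    have : ∀ x : ℂ, {y : ℂ | x + y ∈ ({0} : Set ℂ)} = {-x} := by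
      intro x; ext y
      simp [eq_neg_iff_add_eq_zero, add_comm]
    simp only [this, cm_single, lintegral_zero]
  exact measure_eq_zero_iff_ae_notMem.1 this

/-- `P(|S_m| < |S_k|)` for independent walks -/
noncomputable def fp (m k : ℕ) : ℝ≥0∞ := ∫⁻ c, W m {x | ‖x‖ < ‖c‖} ∂W k

lemma fp_one (n : ℕ) : fp n 1 = W n {x | ‖x‖ < 1} := by
  have : fp n 1 = ∫⁻ c, W n {x | ‖x‖ < 1} ∂W 1 := by
    apply lintegral_congr_ae
    rw [W_one]
    filter_upwards [cm_norm] with c hc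
    rw [hc]
  rw [this]; simp

lemma W_tie {m : ℕ} (hm : 2 ≤ m) (c : ℝ) : W m {x | ‖x‖ = c} = 0 := by
  obtain ⟨m, rfl⟩ := Nat.exists_eq_add_of_le' hm
  rw [show m + 2 = (m + 1) + 1 by ring, W_add, W_one,
    conv_app _ _ (measurableSet_eq_fun (by fun_prop) (by fun_prop)), lintegral_eq_zero_iff']
  · filter_upwards [W_zero (n := m + 1) (by omega)] with a ha
    have := cm_tie ha one_ne_zero (c := c)
    simpa using this
  · exact (measurable_measure_prodMk_left (s := {p : ℂ × ℂ | ‖p.1 + p.2‖ = c})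
      (measurableSet_eq_fun (by fun_prop) (by fun_prop))).aemeasurable

lemma fp_compl' {m k : ℕ} (hm : 2 ≤ m) : fp m k + fp k m = 1 := by
  have h2 : fp k m = ∫⁻ c, W m {x | ‖c‖ < ‖x‖} ∂W k := by
    have e1 : ∀ c, W k {x | ‖x‖ < ‖c‖} =
        ∫⁻ x, {p : ℂ × ℂ | ‖p.1‖ < ‖p.2‖}.indicator 1 (x, c) ∂W k := by
      intro c
      rw [← lintegral_indicator_one (measurableSet_lt (by fun_prop) (by fun_prop))]
      rfl
    have e2 : ∀ c, W m {x | ‖c‖ < ‖x‖} =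
        ∫⁻ x, {p : ℂ × ℂ | ‖p.1‖ < ‖p.2‖}.indicator 1 (c, x) ∂W m := by
      intro c
      rw [← lintegral_indicator_one (measurableSet_lt (by fun_prop) (by fun_prop))]
      rfl
    unfold fp
    simp only [e1, e2]
    rw [lintegral_lintegral_swap]
    have : Measurable ({p : ℂ × ℂ | ‖p.1‖ < ‖p.2‖}.indicator (1 : ℂ × ℂ → ℝ≥0∞)) :=
      measurable_one.indicator (measurableSet_lt (by fun_prop) (by fun_prop))
    exact (this.comp measurable_swap).aemeasurable
  rw [h2, fp, ← lintegral_add_left]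
  · have : ∀ c : ℂ, W m {x | ‖x‖ < ‖c‖} + W m {x | ‖c‖ < ‖x‖} = 1 := by
      intro c
      rw [← measure_union _ (measurableSet_lt (by fun_prop) (by fun_prop))]
      · rw [prob_compl_eq_zero_iff₀ ?_ |>.1]
        · refine measure_mono_null ?_ (W_tie hm ‖c‖)
          intro x hx
          simp at hx ⊢
          exact le_antisymm hx.2 hx.1
        · exact ((measurableSet_lt (by fun_prop) (by fun_prop)).union
            (measurableSet_lt (by fun_prop) (by fun_prop))).nullMeasurableSet
      · rw [Set.disjoint_left]
        intro x hx hx'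
        simp at hx hx'
        linarith
    simp [this]
  · exact measurable_measure_prodMk_left (s := {p : ℂ × ℂ | ‖p.2‖ < ‖p.1‖})
      (measurableSet_lt (by fun_prop) (by fun_prop))

lemma fp_compl {m k : ℕ} (hm : 3 ≤ m + k) : fp m k + fp k m = 1 := by
  by_cases h : 2 ≤ m
  · exact fp_compl' h
  · rw [add_comm]; exact fp_compl' (by omega)

/-- normalised angle -/
noncomputable def G (a b c : ℂ) : ℝ≥0∞ := ENNReal.ofReal (ang ‖a‖ ‖b‖ ‖c‖ / Real.pi)

lemma G_meas : Measurable (fun p : ℂ × ℂ × ℂ => G p.1 p.2.1 p.2.2) := by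
  unfold G ang
  refine ENNReal.measurable_ofReal.comp (Measurable.div_const (Real.measurable_arccos.comp ?_) _)
  fun_prop

lemma cyc (μ ρ κ : Measure ℂ) [SFinite μ] [SFinite ρ] [SFinite κ] (H : ℂ → ℂ → ℂ → ℝ≥0∞)
    (hH : Measurable (fun p : ℂ × ℂ × ℂ => H p.1 p.2.1 p.2.2)) :
    ∫⁻ c, ∫⁻ a, ∫⁻ b, H a b c ∂ρ ∂μ ∂κ = ∫⁻ a, ∫⁻ b, ∫⁻ c, H a b c ∂κ ∂ρ ∂μ := by
  rw [lintegral_lintegral_swap]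
  · congr 1
    ext a
    rw [lintegral_lintegral_swap]
    exact (hH.comp (by fun_prop : Measurable fun q : ℂ × ℂ => (a, q.2, q.1))).aemeasurable
  · apply Measurable.aemeasurable
    exact Measurable.lintegral_prod_right' (f := fun q : (ℂ × ℂ) × ℂ => H q.1.2 q.2 q.1.1)
      (hH.comp (by fun_prop : Measurable fun q : (ℂ × ℂ) × ℂ => (q.1.2, q.2, q.1.1)))

lemma fp_tri {i j k : ℕ} (hi : 1 ≤ i) (hj : 1 ≤ j) (hk : 1 ≤ k) :
    fp (i + j) k = ∫⁻ c, ∫⁻ a, ∫⁻ b, G a b c ∂W j ∂W i ∂W k := by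
  apply lintegral_congr_ae
  filter_upwards [W_zero hk] with c hc
  have hS : MeasurableSet {x : ℂ | ‖x‖ < ‖c‖} := measurableSet_lt (by fun_prop) (by fun_prop)
  rw [W_add, ← lintegral_indicator_one hS, Measure.lintegral_conv (measurable_one.indicator hS)]
  apply lintegral_congr_ae
  filter_upwards [W_zero hi] with a ha
  refine (avg (W_rot j) (fun y => {x : ℂ | ‖x‖ < ‖c‖}.indicator 1 (a + y))
    ((measurable_one.indicator hS).comp (measurable_const_add a))).trans ?_
  apply lintegral_congr_ae
  filter_upwards [W_zero hj] with b hb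
  rw [G, ← cm_tri ha hb (norm_pos_iff.2 hc),
    ← lintegral_indicator_one (measurableSet_lt (by fun_prop) (by fun_prop))]
  rfl

lemma fp_sum {i j k : ℕ} (hi : 1 ≤ i) (hj : 1 ≤ j) (hk : 1 ≤ k) :
    fp (i + j) k + fp (j + k) i + fp (k + i) j = 1 := by
  have m1 := G_meas
  have m2 : Measurable (fun p : ℂ × ℂ × ℂ => G p.2.1 p.2.2 p.1) :=
    Measurable.comp (g := fun p : ℂ × ℂ × ℂ => G p.1 p.2.1 p.2.2)
      (f := fun p : ℂ × ℂ × ℂ => (p.2.1, p.2.2, p.1)) m1 (by fun_prop)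
  have m3 : Measurable (fun p : ℂ × ℂ × ℂ => G p.2.2 p.1 p.2.1) :=
    Measurable.comp (g := fun p : ℂ × ℂ × ℂ => G p.1 p.2.1 p.2.2)
      (f := fun p : ℂ × ℂ × ℂ => (p.2.2, p.1, p.2.1)) m1 (by fun_prop)
  rw [fp_tri hi hj hk, fp_tri hj hk hi, fp_tri hk hi hj, cyc _ _ _ _ m1,
    cyc (W k) (W i) (W j) _ m1, cyc (W i) (W j) (W k) (fun a b c => G c a b) m3]
  have e : ∀ {H : ℂ → ℂ → ℂ → ℝ≥0∞}, Measurable (fun p : ℂ × ℂ × ℂ => H p.1 p.2.1 p.2.2) →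
      ∫⁻ a, ∫⁻ b, ∫⁻ c, H a b c ∂W k ∂W j ∂W i =
      ∫⁻ p, H p.1 p.2.1 p.2.2 ∂((W i).prod ((W j).prod (W k))) := by
    intro H hH
    rw [lintegral_prod _ hH.aemeasurable]
    congr 1
    ext a
    have hq : Measurable fun q : ℂ × ℂ => H a q.1 q.2 :=
      hH.comp (by fun_prop : Measurable fun q : ℂ × ℂ => (a, q))
    exact (lintegral_prod _ hq.aemeasurable).symm
  have e1 := e m1
  have e2 := e (H := fun a b c => G b c a) m2
  have e3 := e (H := fun a b c => G c a b) m3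
  rw [e1, e2, e3, ← lintegral_add_left m1, ← lintegral_add_right _ m3,
    ← e (H := fun a b c => G a b c + G b c a + G c a b) (m1.add m2 |>.add m3)]
  have : ∫⁻ a, ∫⁻ b, ∫⁻ c, (G a b c + G b c a + G c a b) ∂W k ∂W j ∂W i
      = ∫⁻ a, ∫⁻ b, ∫⁻ c, 1 ∂W k ∂W j ∂W i := by
    apply lintegral_congr_ae
    filter_upwards [W_zero hi] with a ha
    apply lintegral_congr_ae
    filter_upwards [W_zero hj] with b hb
    apply lintegral_congr_ae
    filter_upwards [W_zero hk] with c hc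
    have hp := Real.pi_pos
    have nn : ∀ a b c, 0 ≤ ang a b c / Real.pi := fun a b c =>
      div_nonneg (Real.arccos_nonneg _) hp.le
    rw [G, G, G, ← ENNReal.ofReal_add (nn _ _ _) (nn _ _ _),
      ← ENNReal.ofReal_add (add_nonneg (nn _ _ _) (nn _ _ _)) (nn _ _ _), ← add_div, ← add_div,
      ang_sum (norm_pos_iff.2 ha) (norm_pos_iff.2 hb) (norm_pos_iff.2 hc), div_self hp.ne',
      ENNReal.ofReal_one]
  refine Eq.trans this ?_
  simp

lemma fp_final {n : ℕ} (hn : 1 < n) : fp n 1 = 1 / (n + 1) := by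
  set g : ℕ → ℝ := fun k => (fp (n + 1 - k) k).toReal with hg
  have hle : ∀ m k, fp m k ≠ ∞ := by
    intro m k
    have : fp m k ≤ ∫⁻ c, 1 ∂W k := lintegral_mono fun c => prob_le_one
    exact ne_top_of_le_ne_top (by simp) this
  have hc : ∀ k, k ≤ n + 1 → g k + g (n + 1 - k) = 1 := by
    intro k hk
    have := fp_compl (m := n + 1 - k) (k := k) (by omega)
    simp only [hg]
    rw [show n + 1 - (n + 1 - k) = k by omega, ← ENNReal.toReal_add (hle _ _) (hle _ _), this]
    simp
  have ha : ∀ j, 1 ≤ j → j + 1 ≤ n → g (j + 1) = g j + g 1 := by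
    intro j hj hjn
    obtain ⟨k, hk⟩ : ∃ k, n + 1 = 1 + j + k := ⟨n - j, by omega⟩
    have h1 := fp_sum (i := 1) (j := j) (k := k) le_rfl hj (by omega)
    have h2 := hc (j + 1) (by omega)
    have h3 : g k + g 1 + g j = 1 := by
      simp only [hg]
      rw [show n + 1 - k = 1 + j by omega, show n + 1 - 1 = j + k by omega,
        show n + 1 - j = k + 1 by omega, ← ENNReal.toReal_add (hle _ _) (hle _ _),
        ← ENNReal.toReal_add (ENNReal.add_ne_top.2 ⟨hle _ _, hle _ _⟩) (hle _ _), h1]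
      simp
    rw [show n + 1 - (j + 1) = k by omega] at h2
    linarith
  have hl : ∀ j, 1 ≤ j → j ≤ n → g j = j * g 1 := by
    intro j hj
    induction j, hj using Nat.le_induction with
    | base => intro _; simp
    | succ j hj ih =>
      intro h
      rw [ha j hj h, ih (by omega)]; push_cast; ring
  have h1 := hc 1 (by omega)
  rw [show n + 1 - 1 = n by omega, hl n hn.le le_rfl] at h1
  have h2 : g 1 = 1 / ((n : ℝ) + 1) := by
    rw [eq_div_iff (by positivity)]; linarith
  have h3 : (fp n 1).toReal = 1 / ((n : ℝ) + 1) := by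
    rw [← h2]; simp [hg]
  rw [← ENNReal.ofReal_toReal (hle n 1), h3, ENNReal.ofReal_div_of_pos (by positivity),
    ENNReal.ofReal_add (by positivity) (by positivity)]
  simp

lemma W_pi (n : ℕ) :
    Measure.map (fun u : Fin n → ℂ => ∑ i, u i) (Measure.pi fun _ => cm) = W n := by
  induction n with
  | zero =>
    simp [W, Measure.map_const]
  | succ n ih =>
    have h := measurePreserving_piFinSuccAbove (fun _ : Fin (n + 1) => cm) 0
    rw [W, ← ih, Measure.conv]
    nth_rewrite 2 [← Measure.map_id (μ := cm)]
    rw [Measure.map_prod_map _ _ measurable_id (by fun_prop), Measure.map_map (by fun_prop) (by fun_prop),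
      ← h.map_eq, Measure.map_map (by fun_prop) h.measurable]
    congr 1
    ext u
    simp [Fin.sum_univ_succ, Fin.tail]

lemma norm_step {n : ℕ} (θ : Fin n → ℝ) :
    ‖∑ i, stepVec (θ i)‖ = ‖∑ i, Complex.exp (θ i * Complex.I)‖ := by
  have : ∀ t, stepVec t = Complex.orthonormalBasisOneI.repr (Complex.exp (t * Complex.I)) := by
    intro t
    ext i
    fin_cases i <;> simp [stepVec, Complex.exp_ofReal_mul_I_re, Complex.exp_ofReal_mul_I_im]
  simp only [this]
  rw [← map_sum, LinearIsometryEquiv.norm_map]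

lemma meas_step : Measurable stepVec := by
  have : Continuous stepVec := by
    unfold stepVec
    refine (PiLp.continuous_toLp 2 _).comp (continuous_pi fun i => ?_)
    fin_cases i
    · exact Real.continuous_cos
    · exact Real.continuous_sin
  exact this.measurable

end Rayleigh

theorem stmt_1 (n : ℕ) (hn : 1 < n) :
    (Measure.pi fun _ : Fin n => uniformCircle) {u | ‖∑ i, u i‖ < 1} =
      1 / (n + 1) := by
  rw [← Rayleigh.fp_final hn, Rayleigh.fp_one, ← Rayleigh.W_pi]
  have : IsProbabilityMeasure (Measure.map stepVec
    ((ENNReal.ofReal (2 * Real.pi))⁻¹ • volume.restrict (Set.Ioc 0 (2 * Real.pi)))) :=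
    Measure.isProbabilityMeasure_map Rayleigh.meas_step.aemeasurable
  have h2 : IsProbabilityMeasure (Measure.map (fun θ : ℝ => Complex.exp (θ * Complex.I))
    ((ENNReal.ofReal (2 * Real.pi))⁻¹ • volume.restrict (Set.Ioc 0 (2 * Real.pi)))) :=
    Rayleigh.cm_prob
  have m1 : Measurable fun (x : Fin n → ℝ) i => stepVec (x i) :=
    measurable_pi_lambda _ fun i => Rayleigh.meas_step.comp (measurable_pi_apply i)
  have m2 : Measurable fun (x : Fin n → ℝ) i => Complex.exp (x i * Complex.I) :=
    measurable_pi_lambda _ fun i => Rayleigh.meas_exp.comp (measurable_pi_apply i)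
  rw [Measure.map_apply (by fun_prop) (measurableSet_lt (by fun_prop) (by fun_prop))]
  unfold uniformCircle Rayleigh.cm
  rw [← Measure.pi_map_pi (fun _ => Rayleigh.meas_step.aemeasurable),
    ← Measure.pi_map_pi (fun _ => Rayleigh.meas_exp.aemeasurable),
    Measure.map_apply m1 (measurableSet_lt (by fun_prop) (by fun_prop)),
    Measure.map_apply m2 ((by fun_prop : Measurable fun u : Fin n → ℂ => ∑ i, u i)
      (measurableSet_lt (by fun_prop) (by fun_prop)))]
  congr 1
  ext θ
  simp only [Set.mem_preimage, Set.mem_ofPred_eq, Rayleigh.norm_step]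
end

section
/- Let a, b, c be strictly positive real constants such that none of them is greater than the sum of the other two (so there is a triangle with side lengths a, b, c), and let α ∈ [0, π] be the angle of this triangle between the sides of lengths b and c, i.e. α = arccos((b² + c² − a²)/(2bc)). If U and V are independent random unit vectors uniformly distributed on the unit circle of ℝ², then Pr(a > ‖bU + cV‖) = α/π. -/
open MeasureTheory ProbabilityTheory
open scoped ENNReal

theorem continuous_stepVec : Continuous stepVec := by
  unfold stepVec
  refine (PiLp.continuous_toLp 2 _).comp ?_
  refine continuous_pi fun i => ?_
  fin_cases i
  · exact Real.continuous_cos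
  · exact Real.continuous_sin

theorem norm_sq_step (b c θ φ : ℝ) :
    ‖b • stepVec θ + c • stepVec φ‖ ^ 2 = b ^ 2 + c ^ 2 + 2 * b * c * Real.cos (φ - θ) := by
  rw [EuclideanSpace.real_norm_sq_eq, Real.cos_sub]
  simp [stepVec, Fin.sum_univ_two]
  linear_combination b ^ 2 * Real.sin_sq_add_cos_sq θ + c ^ 2 * Real.sin_sq_add_cos_sq φ

theorem arc_volume (θ k : ℝ) (h1 : -1 ≤ k) (h2 : k ≤ 1) :
    volume ({φ : ℝ | Real.cos (φ - θ) < -k} ∩ Set.Ioc 0 (2 * Real.pi)) =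
      ENNReal.ofReal (2 * Real.arccos k) := by
  have hpi := Real.pi_pos
  have hA : MeasurableSet {φ : ℝ | Real.cos (φ - θ) < -k} :=
    (isOpen_lt (by fun_prop) continuous_const).measurableSet
  have key := (isAddFundamentalDomain_Ioc (T := 2 * Real.pi) (by positivity) 0 volume).measure_set_eq
    (isAddFundamentalDomain_Ioc (T := 2 * Real.pi) (by positivity) θ volume) hA (by
      rintro ⟨g, hg⟩
      obtain ⟨n, rfl⟩ := AddSubgroup.mem_zmultiples_iff.1 hg
      ext x
      have : n • (2 * Real.pi) + x - θ = (x - θ) + n * (2 * Real.pi) := by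
        simp only [zsmul_eq_mul]; ring
      simp only [Set.mem_preimage, Set.mem_ofPred_eq, AddSubgroup.mk_vadd, vadd_eq_add]
      rw [this, Real.cos_add_int_mul_two_pi])
  rw [zero_add] at key
  rw [key]
  have hα0 := Real.arccos_nonneg k
  have hαpi := Real.arccos_le_pi k
  have hcos := Real.cos_arccos h1 h2
  have : {φ : ℝ | Real.cos (φ - θ) < -k} ∩ Set.Ioc θ (θ + 2 * Real.pi) =
      Set.Ioo (θ + Real.pi - Real.arccos k) (θ + Real.pi + Real.arccos k) := by
    ext φ
    have e : Real.cos (φ - θ) = - Real.cos |φ - θ - Real.pi| := by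
      rw [Real.cos_abs, Real.cos_sub_pi, neg_neg]
    have habs : |φ - θ - Real.pi| < Real.arccos k ↔
        φ ∈ Set.Ioo (θ + Real.pi - Real.arccos k) (θ + Real.pi + Real.arccos k) := by
      rw [abs_lt, Set.mem_Ioo]
      constructor <;> rintro ⟨h, h'⟩ <;> constructor <;> linarith
    rw [← habs]
    simp only [Set.mem_inter_iff, Set.mem_ofPred_eq, Set.mem_Ioc, e, neg_lt_neg_iff]
    constructor
    · rintro ⟨h, h3, h4⟩
      have hle : |φ - θ - Real.pi| ≤ Real.pi := abs_le.2 ⟨by linarith, by linarith⟩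
      by_contra! hcon
      have := Real.cos_le_cos_of_nonneg_of_le_pi hα0 hle hcon
      linarith
    · intro h
      have := Real.cos_lt_cos_of_nonneg_of_le_pi (abs_nonneg _) hαpi h
      have h5 := abs_lt.1 h
      exact ⟨by linarith, by linarith, by linarith⟩
  rw [this, Real.volume_Ioo]
  congr 1
  ring

theorem uniformCircle_apply {s : Set (EuclideanSpace ℝ (Fin 2))} (hs : MeasurableSet s) :
    uniformCircle s = (ENNReal.ofReal (2 * Real.pi))⁻¹ *
      volume (stepVec ⁻¹' s ∩ Set.Ioc 0 (2 * Real.pi)) := by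
  have hm := continuous_stepVec.measurable
  rw [uniformCircle, Measure.map_apply hm hs, Measure.smul_apply,
    Measure.restrict_apply (hm hs), smul_eq_mul]

instance : IsProbabilityMeasure uniformCircle := by
  refine ⟨?_⟩
  rw [uniformCircle_apply MeasurableSet.univ]
  have : 0 < 2 * Real.pi := by positivity
  simp only [Set.preimage_univ, Set.univ_inter, Real.volume_Ioc, sub_zero]
  exact ENNReal.inv_mul_cancel (by simpa using Real.pi_pos) ENNReal.ofReal_ne_top

theorem stmt_3 (a b c : ℝ) (ha : 0 < a) (hb : 0 < b) (hc : 0 < c)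
    (habc : a ≤ b + c) (hbac : b ≤ a + c) (hcab : c ≤ a + b) :
    (uniformCircle.prod uniformCircle)
        {p : EuclideanSpace ℝ (Fin 2) × EuclideanSpace ℝ (Fin 2) | ‖b • p.1 + c • p.2‖ < a} =
      ENNReal.ofReal (Real.arccos ((b ^ 2 + c ^ 2 - a ^ 2) / (2 * b * c)) / Real.pi) := by
  have hpi := Real.pi_pos
  set k := (b ^ 2 + c ^ 2 - a ^ 2) / (2 * b * c) with hk
  have hbc : 0 < 2 * b * c := by positivity
  have h1 : -1 ≤ k := by
    rw [hk, le_div_iff₀ hbc]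
    nlinarith
  have h2 : k ≤ 1 := by
    rw [hk, div_le_iff₀ hbc]
    nlinarith
  have hkm : k * (2 * b * c) = b ^ 2 + c ^ 2 - a ^ 2 := div_mul_cancel₀ _ hbc.ne'
  have hS : MeasurableSet {p : EuclideanSpace ℝ (Fin 2) × EuclideanSpace ℝ (Fin 2) |
      ‖b • p.1 + c • p.2‖ < a} := (isOpen_lt (by fun_prop) continuous_const).measurableSet
  have hiff (θ φ : ℝ) : ‖b • stepVec θ + c • stepVec φ‖ < a ↔ Real.cos (φ - θ) < -k := by
    rw [← sq_lt_sq₀ (norm_nonneg _) ha.le, norm_sq_step, ← mul_lt_mul_iff_right₀ (b := Real.cos (φ - θ)) hbc]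
    constructor <;> intro h <;> linarith
  have hconst (θ : ℝ) : uniformCircle (Prod.mk (stepVec θ) ⁻¹'
      {p : EuclideanSpace ℝ (Fin 2) × EuclideanSpace ℝ (Fin 2) | ‖b • p.1 + c • p.2‖ < a}) =
      ENNReal.ofReal (Real.arccos k / Real.pi) := by
    rw [uniformCircle_apply (measurable_prodMk_left hS)]
    have : stepVec ⁻¹' (Prod.mk (stepVec θ) ⁻¹'
      {p : EuclideanSpace ℝ (Fin 2) × EuclideanSpace ℝ (Fin 2) | ‖b • p.1 + c • p.2‖ < a}) =
        {φ : ℝ | Real.cos (φ - θ) < -k} := by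
      ext φ
      exact hiff θ φ
    rw [this, arc_volume θ k h1 h2, ← ENNReal.ofReal_inv_of_pos (by positivity),
      ← ENNReal.ofReal_mul (by positivity)]
    congr 1
    field_simp
  rw [Measure.prod_apply hS]
  have hae : ∀ᵐ u ∂uniformCircle, uniformCircle (Prod.mk u ⁻¹'
      {p : EuclideanSpace ℝ (Fin 2) × EuclideanSpace ℝ (Fin 2) | ‖b • p.1 + c • p.2‖ < a}) =
      ENNReal.ofReal (Real.arccos k / Real.pi) := by
    have hm := measurable_measure_prodMk_left (ν := uniformCircle) hS
    conv => enter [2]; rw [uniformCircle]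
    rw [ae_map_iff continuous_stepVec.measurable.aemeasurable
      (measurableSet_eq_fun hm measurable_const)]
    exact Filter.Eventually.of_forall hconst
  rw [lintegral_congr_ae hae, lintegral_const, measure_univ, mul_one]
end

section
/- Let X be a real random variable taking strictly positive values, and let k, l be non-negative integers with k + l > 2. If D_k and D_l are independent random variables distributed respectively like k⊙X and l⊙X, then Pr(D_k = D_l) = 0; that is, the two walkers end at exactly the same distance from the origin with probability zero. -/
open MeasureTheory ProbabilityTheory
open scoped ENNReal

lemma stepVec_meas : Measurable stepVec := by
  have : Continuous stepVec := by
    unfold stepVec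
    refine (PiLp.continuous_toLp 2 _).comp ?_
    refine continuous_pi fun i => ?_
    fin_cases i
    · exact Real.continuous_cos
    · exact Real.continuous_sin
  exact this.measurable

instance uniformCircle_finite : IsFiniteMeasure uniformCircle := by
  unfold uniformCircle
  have : IsFiniteMeasure ((ENNReal.ofReal (2 * Real.pi))⁻¹ • volume.restrict (Set.Ioc 0 (2 * Real.pi)) : Measure ℝ) := by
    refine ⟨?_⟩
    simp only [Measure.smul_apply, smul_eq_mul]
    refine ENNReal.mul_lt_top ?_ (measure_lt_top _ _)
    rw [ENNReal.inv_lt_top, ENNReal.ofReal_pos]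
    positivity
  infer_instance

lemma circ_null (s : Set (EuclideanSpace ℝ (Fin 2))) (hs : MeasurableSet s)
    (h : (stepVec ⁻¹' s).Countable) : uniformCircle s = 0 := by
  unfold uniformCircle
  rw [Measure.map_apply stepVec_meas hs]
  simp only [Measure.smul_apply, smul_eq_mul]
  rw [h.measure_zero]
  simp

lemma cos_countable (a : ℝ) : {θ : ℝ | Real.cos θ = a}.Countable := by
  by_cases h : ∃ α, Real.cos α = a
  · obtain ⟨α, rfl⟩ := h
    refine ((Set.countable_range (fun k : ℤ => 2 * k * Real.pi + α)).union
      (Set.countable_range (fun k : ℤ => 2 * k * Real.pi - α))).mono ?_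
    intro θ hθ
    obtain ⟨k, hk⟩ := Real.cos_eq_cos_iff.1 (Eq.symm hθ)
    rcases hk with hk | hk
    · exact Or.inl ⟨k, hk.symm⟩
    · exact Or.inr ⟨k, hk.symm⟩
  · convert Set.countable_empty
    ext θ
    simp only [Set.mem_setOf_eq, Set.mem_empty_iff_false, iff_false]
    exact fun hh => h ⟨θ, hh⟩

lemma lin_countable (a b d : ℝ) (h : a ≠ 0 ∨ b ≠ 0) :
    {θ : ℝ | a * Real.cos θ + b * Real.sin θ = d}.Countable := by
  have hz : (⟨a, b⟩ : ℂ) ≠ 0 := by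
    intro h0
    rw [Complex.ext_iff] at h0
    simp at h0
    tauto
  have hn : ‖(⟨a, b⟩ : ℂ)‖ ≠ 0 := norm_ne_zero_iff.2 hz
  have h1 := Complex.norm_mul_cos_arg (⟨a, b⟩ : ℂ)
  have h2 := Complex.norm_mul_sin_arg (⟨a, b⟩ : ℂ)
  simp only at h1 h2
  set r := ‖(⟨a, b⟩ : ℂ)‖
  set φ := Complex.arg ⟨a, b⟩
  refine ((cos_countable (d / r)).preimage (f := fun θ => θ - φ) (sub_left_injective)).mono ?_
  intro θ hθ
  simp only [Set.mem_preimage, Set.mem_setOf_eq] at hθ ⊢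
  rw [eq_div_iff hn, Real.cos_sub, ← hθ]
  linear_combination Real.cos θ * h1 + Real.sin θ * h2

lemma null_A (v : EuclideanSpace ℝ (Fin 2)) (hv : v ≠ 0) (x : ℝ) (hx : 0 < x) (c : ℝ) :
    uniformCircle {u | ‖x • u + v‖ = c} = 0 := by
  refine circ_null _ (measurableSet_eq_fun (by fun_prop) measurable_const) ?_
  have h : v 0 ≠ 0 ∨ v 1 ≠ 0 := by
    by_contra! h
    apply hv
    ext i
    fin_cases i
    · exact h.1
    · exact h.2
  refine (lin_countable (v 0) (v 1) ((c ^ 2 - x ^ 2 - v 0 ^ 2 - v 1 ^ 2) / (2 * x)) h).mono ?_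
  intro θ hθ
  simp only [Set.mem_preimage, Set.mem_setOf_eq] at hθ ⊢
  rw [eq_div_iff (by positivity), ← hθ, EuclideanSpace.norm_sq_eq]
  simp [stepVec, Fin.sum_univ_two]
  linear_combination - x ^ 2 * Real.sin_sq_add_cos_sq θ

lemma stepVec_ne (θ : ℝ) : stepVec θ ≠ 0 := by
  intro h
  have h0 : stepVec θ 0 = 0 := by rw [h]; rfl
  have h1 : stepVec θ 1 = 0 := by rw [h]; rfl
  simp [stepVec] at h0 h1
  have := Real.sin_sq_add_cos_sq θ
  rw [h0, h1] at this
  norm_num at this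

lemma null_A' (v : EuclideanSpace ℝ (Fin 2)) (x : ℝ) (hx : 0 < x) :
    uniformCircle {u | x • u + v = 0} = 0 := by
  by_cases hv : v = 0
  · subst hv
    refine circ_null _ (measurableSet_eq_fun (by fun_prop) measurable_const) ?_
    convert Set.countable_empty
    ext θ
    simp [hx.ne', stepVec_ne]
  · simpa using null_A v hv x hx 0

lemma split_null {n : ℕ} (x : Fin (n + 1) → ℝ) (Q : EuclideanSpace ℝ (Fin 2) → Prop)
    (hQ : MeasurableSet {v | Q v})
    (h : ∀ᵐ w ∂(Measure.pi fun _ : Fin n => uniformCircle),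
      uniformCircle {u | Q (x 0 • u + ∑ i, x i.succ • w i)} = 0) :
    (Measure.pi fun _ : Fin (n + 1) => uniformCircle) {u | Q (∑ i, x i • u i)} = 0 := by
  have hmp := measurePreserving_piFinSuccAbove (fun _ : Fin (n + 1) => uniformCircle) 0
  have hs : MeasurableSet {p : EuclideanSpace ℝ (Fin 2) × (Fin n → EuclideanSpace ℝ (Fin 2)) |
      Q (x 0 • p.1 + ∑ i, x i.succ • p.2 i)} := by
    have : Measurable fun p : EuclideanSpace ℝ (Fin 2) × (Fin n → EuclideanSpace ℝ (Fin 2)) =>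
      (x 0 • p.1 + ∑ i, x i.succ • p.2 i) := by fun_prop
    exact this hQ
  have h1 := hmp.measure_preimage hs.nullMeasurableSet
  have h2 : (uniformCircle.prod (Measure.pi fun _ : Fin n => uniformCircle))
      {p | Q (x 0 • p.1 + ∑ i, x i.succ • p.2 i)} = 0 := by
    rw [Measure.prod_apply_symm hs]
    refine (lintegral_congr_ae (g := fun _ => 0) ?_).trans lintegral_zero
    filter_upwards [h] with w hw
    exact hw
  refine Eq.trans ?_ (h1.trans h2)
  congr 1
  ext u
  simp [Fin.sum_univ_succ, MeasurableEquiv.piFinSuccAbove, Fin.insertNthEquiv, Fin.removeNth, Fin.tail]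

lemma null_B {n : ℕ} (x : Fin (n + 1) → ℝ) (hx : ∀ i, 0 < x i) :
    (Measure.pi fun _ : Fin (n + 1) => uniformCircle) {u | ∑ i, x i • u i = 0} = 0 :=
  split_null x (fun v => v = 0) (measurableSet_singleton 0)
    (Filter.Eventually.of_forall fun w => null_A' _ _ (hx 0))

lemma null_C {n : ℕ} (x : Fin (n + 2) → ℝ) (hx : ∀ i, 0 < x i) (c : ℝ) :
    (Measure.pi fun _ : Fin (n + 2) => uniformCircle) {u | ‖∑ i, x i • u i‖ = c} = 0 := by
  refine split_null x (fun v => ‖v‖ = c) (measurableSet_eq_fun (by fun_prop) measurable_const) ?_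
  have := null_B (fun i => x i.succ) (fun i => hx _)
  filter_upwards [measure_eq_zero_iff_ae_notMem.1 this] with w hw
  exact null_A _ hw _ (hx 0) c

lemma walk_atomless (μ : Measure ℝ) [IsProbabilityMeasure μ] (hμ : ∀ᵐ x ∂μ, 0 < x)
    (n : ℕ) (hn : 2 ≤ n) (c : ℝ) : walkDist μ n {c} = 0 := by
  obtain ⟨n, rfl⟩ := Nat.exists_eq_add_of_le' hn
  have hm : Measurable (fun p : (Fin (n+2) → ℝ) × (Fin (n+2) → EuclideanSpace ℝ (Fin 2)) =>
    ‖∑ i, p.1 i • p.2 i‖) := by fun_prop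
  unfold walkDist
  rw [Measure.map_apply hm (measurableSet_singleton c),
    Measure.measure_prod_null (hm (measurableSet_singleton c))]
  have : ∀ᵐ x ∂(Measure.pi fun _ : Fin (n + 2) => μ), ∀ i, 0 < x i := by
    rw [ae_all_iff]
    intro i
    exact (Measure.quasiMeasurePreserving_eval (fun _ => μ) i).ae hμ
  filter_upwards [this] with x hx
  exact null_C x hx c

lemma main_aux {Ω : Type*} [MeasurableSpace Ω] (P : Measure Ω) [IsProbabilityMeasure P]
    (A B : Ω → ℝ) (hA : Measurable A) (hB : Measurable B) (hind : IndepFun A B P)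
    (h : ∀ c, Measure.map A P {c} = 0) : P {ω | A ω = B ω} = 0 := by
  have h1 := (indepFun_iff_map_prod_eq_prod_map_map hA.aemeasurable hB.aemeasurable).1 hind
  have hs : MeasurableSet {p : ℝ × ℝ | p.1 = p.2} := measurableSet_eq_fun measurable_fst measurable_snd
  have h2 : P {ω | A ω = B ω} = Measure.map (fun ω => (A ω, B ω)) P {p : ℝ × ℝ | p.1 = p.2} := by
    rw [Measure.map_apply (hA.prodMk hB) hs]; rfl
  haveI := Measure.isProbabilityMeasure_map (μ := P) hA.aemeasurable
  haveI := Measure.isProbabilityMeasure_map (μ := P) hB.aemeasurable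
  rw [h2, h1, Measure.prod_apply_symm hs]
  simp only [Set.preimage_setOf_eq]
  simp [h]

theorem stmt_5 {Ω : Type*} [MeasurableSpace Ω] (P : Measure Ω) [IsProbabilityMeasure P]
    (X : Ω → ℝ) (hX : Measurable X) (hXpos : ∀ ω, 0 < X ω)
    (k l : ℕ) (hkl : 2 < k + l)
    (Dk Dl : Ω → ℝ) (hDk : Measurable Dk) (hDl : Measurable Dl)
    (hind : IndepFun Dk Dl P)
    (hDklaw : Measure.map Dk P = walkDist (Measure.map X P) k)
    (hDllaw : Measure.map Dl P = walkDist (Measure.map X P) l) :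
    P {ω | Dk ω = Dl ω} = 0 := by
  haveI := Measure.isProbabilityMeasure_map (μ := P) hX.aemeasurable
  have hpos : ∀ᵐ x ∂(Measure.map X P), 0 < x := by
    rw [ae_map_iff hX.aemeasurable measurableSet_Ioi]
    exact Filter.Eventually.of_forall hXpos
  by_cases hk : 2 ≤ k
  · refine main_aux P Dk Dl hDk hDl hind fun c => ?_
    rw [hDklaw]
    exact walk_atomless _ hpos k hk c
  · have := main_aux P Dl Dk hDl hDk hind.symm fun c => by
      rw [hDllaw]
      exact walk_atomless _ hpos l (by omega) c
    simpa only [eq_comm] using this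
end

section
/- Let X be a real random variable taking strictly positive values, let s > 2 be an integer, and for 0 ≤ i ≤ s set p_i = Pr(D_i > D_{s−i}), where D_i and D_{s−i} are independent random variables distributed respectively like i⊙X and (s−i)⊙X. Then p_i = i·p_1 for every i ∈ {1, …, s}; in particular p_1 = 1/s. -/
open MeasureTheory ProbabilityTheory
open scoped ENNReal

namespace RW
noncomputable def tau : Measure ℝ :=
  (ENNReal.ofReal (2 * Real.pi))⁻¹ • volume.restrict (Set.Ioc 0 (2 * Real.pi))

instance : IsProbabilityMeasure tau := by
  constructor
  have h : (0:ℝ) < 2 * Real.pi := by positivity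
  simp only [tau, Measure.smul_apply, Measure.restrict_apply MeasurableSet.univ, Set.univ_inter,
    Real.volume_Ioc, sub_zero, smul_eq_mul]
  exact ENNReal.inv_mul_cancel (by simpa using h) ENNReal.ofReal_ne_top

noncomputable def step (q : ℝ × ℝ) : ℂ := (q.1 : ℂ) * Complex.exp (q.2 * Complex.I)

lemma measurable_step : Measurable step := by unfold step; fun_prop

noncomputable def sigma (μ : Measure ℝ) : Measure ℂ := (μ.prod tau).map step

instance (μ : Measure ℝ) [IsProbabilityMeasure μ] : IsProbabilityMeasure (sigma μ) :=
  Measure.isProbabilityMeasure_map measurable_step.aemeasurable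

noncomputable def nu (μ : Measure ℝ) (n : ℕ) : Measure ℂ :=
  (Measure.pi (fun _ : Fin n => sigma μ)).map (fun z => ∑ i, z i)

instance (μ : Measure ℝ) [IsProbabilityMeasure μ] (n : ℕ) : IsProbabilityMeasure (nu μ n) :=
  Measure.isProbabilityMeasure_map (by fun_prop)

lemma charFun_nu (μ : Measure ℝ) [IsProbabilityMeasure μ] (n : ℕ) (t : ℂ) :
    charFun (nu μ n) t = charFun (sigma μ) t ^ n := by
  unfold nu
  rw [charFun_map_sum_pi_eq_prod]
  simp

lemma nu_add (μ : Measure ℝ) [IsProbabilityMeasure μ] (m n : ℕ) :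
    nu μ (m + n) = ((nu μ m).prod (nu μ n)).map (fun q => q.1 + q.2) := by
  have : IsProbabilityMeasure (((nu μ m).prod (nu μ n)).map (fun q => q.1 + q.2)) :=
    Measure.isProbabilityMeasure_map (by fun_prop)
  apply Measure.ext_of_charFun
  ext t
  rw [charFun_map_add_prod_eq_mul, Pi.mul_apply, charFun_nu, charFun_nu, charFun_nu, pow_add]

lemma nu_one (μ : Measure ℝ) [IsProbabilityMeasure μ] : nu μ 1 = sigma μ := by
  apply Measure.ext_of_charFun
  ext t
  rw [charFun_nu, pow_one]

lemma nu_zero (μ : Measure ℝ) [IsProbabilityMeasure μ] : nu μ 0 = Measure.dirac 0 := by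
  apply Measure.ext_of_charFun
  ext t
  rw [charFun_nu, pow_zero, charFun_dirac]; simp

lemma measurable_stepVec : Measurable stepVec := by
  apply Continuous.measurable
  unfold stepVec
  refine (PiLp.continuous_toLp 2 (fun _ : Fin 2 => ℝ)).comp ?_
  fun_prop

lemma norm_stepVec_sum {n : ℕ} (x θ : Fin n → ℝ) :
    ‖∑ i, x i • stepVec (θ i)‖ = ‖∑ i, step (x i, θ i)‖ := by
  rw [← Complex.orthonormalBasisOneI.repr.symm.norm_map]
  congr 1
  rw [map_sum]
  refine Finset.sum_congr rfl fun i _ => ?_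
  rw [map_smul]
  have h : Complex.orthonormalBasisOneI.repr.symm (stepVec (θ i))
      = Complex.exp (θ i * Complex.I) := by
    rw [LinearIsometryEquiv.symm_apply_eq]
    ext j
    rw [Complex.orthonormalBasisOneI_repr_apply]
    fin_cases j <;> simp [stepVec, Complex.exp_ofReal_mul_I_re, Complex.exp_ofReal_mul_I_im]
  rw [h]
  simp [step]

lemma walkDist_eq (μ : Measure ℝ) [IsProbabilityMeasure μ] (n : ℕ) :
    walkDist μ n = (nu μ n).map (fun z => ‖z‖) := by
  have hu : uniformCircle = tau.map stepVec := rfl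
  have : IsProbabilityMeasure uniformCircle := by
    rw [hu]; exact Measure.isProbabilityMeasure_map measurable_stepVec.aemeasurable
  have h1 : (Measure.pi fun _ : Fin n => uniformCircle)
      = (Measure.pi fun _ : Fin n => tau).map (fun θ i => stepVec (θ i)) := by
    rw [hu, Measure.pi_map_pi (fun _ => measurable_stepVec.aemeasurable)]
  have h2 : (Measure.pi fun _ : Fin n => sigma μ)
      = (Measure.pi fun _ : Fin n => μ.prod tau).map (fun q i => step (q i)) := by
    unfold sigma
    rw [Measure.pi_map_pi (fun _ => measurable_step.aemeasurable)]
  have h3 : (Measure.pi fun _ : Fin n => μ).prod (Measure.pi fun _ : Fin n => tau)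
      = (Measure.pi fun _ : Fin n => μ.prod tau).map
        (fun q => (fun i => (q i).1, fun i => (q i).2)) :=
    (measurePreserving_arrowProdEquivProdArrow ℝ ℝ (Fin n) (fun _ => μ) (fun _ => tau)).map_eq.symm
  have hm := measurable_stepVec
  have hm' := measurable_step
  have h4 : (Measure.pi fun _ : Fin n => μ).prod (Measure.pi fun _ : Fin n => uniformCircle)
      = ((Measure.pi fun _ : Fin n => μ).prod (Measure.pi fun _ : Fin n => tau)).map
        (fun p => (p.1, fun i => stepVec (p.2 i))) := by
    rw [h1]
    have := Measure.map_prod_map (Measure.pi fun _ : Fin n => μ) (Measure.pi fun _ : Fin n => tau)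
      (f := id) (g := fun θ i => stepVec (θ i)) measurable_id (by fun_prop)
    rw [Measure.map_id] at this
    exact this
  unfold walkDist nu
  rw [h4, h3, h2, Measure.map_map (by fun_prop) (by fun_prop),
    Measure.map_map (by fun_prop) (by fun_prop), Measure.map_map (by fun_prop) (by fun_prop),
    Measure.map_map (by fun_prop) (by fun_prop)]
  congr 1
  ext q
  exact norm_stepVec_sum _ _

lemma lintegral_tau (f : ℝ → ℝ≥0∞) : ∫⁻ θ, f θ ∂tau =
    (ENNReal.ofReal (2 * Real.pi))⁻¹ * ∫⁻ θ in Set.Ioc 0 (2 * Real.pi), f θ := by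
  unfold tau
  rw [lintegral_smul_measure]; rfl

lemma shift (f : ℝ → ℝ≥0∞) (hf : Function.Periodic f (2 * Real.pi)) (ψ : ℝ) :
    ∫⁻ θ, f (θ + ψ) ∂tau = ∫⁻ θ, f θ ∂tau := by
  rw [lintegral_tau, lintegral_tau]
  congr 1
  have h2 : (0:ℝ) < 2 * Real.pi := by positivity
  have h : ∫⁻ θ in Set.Ioc 0 (2 * Real.pi), f (θ + ψ)
      = ∫⁻ θ in Set.Ioc ψ (ψ + 2 * Real.pi), f θ := by
    have := (measurePreserving_add_right (volume : Measure ℝ) ψ).setLIntegral_comp_preimage_emb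
      (measurableEmbedding_addRight ψ) f (Set.Ioc ψ (ψ + 2 * Real.pi))
    rw [← this]
    congr 2
    ext x
    simp [Set.mem_Ioc]
  rw [h]
  have k1 := isAddFundamentalDomain_Ioc h2 ψ (volume : Measure ℝ)
  have k2 := isAddFundamentalDomain_Ioc h2 0 (volume : Measure ℝ)
  rw [zero_add] at k2
  refine k1.setLIntegral_eq k2 f ?_
  rintro ⟨g, hg⟩ x
  obtain ⟨n, rfl⟩ := AddSubgroup.mem_zmultiples_iff.1 hg
  change f (n • (2 * Real.pi) + x) = f x
  rw [add_comm]
  exact hf.zsmul n x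

lemma exp_periodic (θ : ℝ) :
    Complex.exp (((θ + 2 * Real.pi : ℝ) : ℂ) * Complex.I) = Complex.exp (θ * Complex.I) := by
  push_cast
  rw [add_mul, Complex.exp_periodic]

def RotInv (γ : Measure ℂ) : Prop :=
  ∀ φ : ℝ, γ.map (fun z => Complex.exp (φ * Complex.I) * z) = γ

lemma rotInv_sigma (μ : Measure ℝ) [IsProbabilityMeasure μ] : RotInv (sigma μ) := by
  intro φ
  refine Measure.ext_of_lintegral _ fun f hf => ?_
  have hs := measurable_step
  unfold sigma
  rw [lintegral_map hf (by fun_prop), lintegral_map (by fun_prop) hs, lintegral_map hf hs,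
    lintegral_prod _ (by fun_prop), lintegral_prod _ (by fun_prop)]
  refine lintegral_congr fun x => ?_
  rw [← shift (fun θ => f (step (x, θ))) _ φ]
  · refine lintegral_congr fun θ => ?_
    congr 1
    simp only [step]
    push_cast
    rw [add_mul, Complex.exp_add]
    ring
  · intro θ
    simp only [step]
    rw [exp_periodic]

lemma charFun_rot (γ : Measure ℂ) (φ : ℝ) (t : ℂ) :
    charFun (γ.map (fun z => Complex.exp (φ * Complex.I) * z)) t
      = charFun γ (Complex.exp (-φ * Complex.I) * t) := by
  rw [charFun_apply, charFun_apply, integral_map (by fun_prop) (by fun_prop)]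
  refine integral_congr_ae (Filter.Eventually.of_forall fun z => ?_)
  simp only
  congr 3
  simp only [Complex.inner, map_mul, ← Complex.exp_conj, Complex.conj_I, Complex.conj_ofReal]
  congr 1
  rw [mul_neg, neg_mul]
  ring

lemma rotInv_nu (μ : Measure ℝ) [IsProbabilityMeasure μ] (n : ℕ) : RotInv (nu μ n) := by
  intro φ
  have : IsProbabilityMeasure ((nu μ n).map (fun z => Complex.exp (φ * Complex.I) * z)) :=
    Measure.isProbabilityMeasure_map (by fun_prop)
  apply Measure.ext_of_charFun
  ext t
  rw [charFun_rot, charFun_nu, charFun_nu, ← charFun_rot, rotInv_sigma]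

lemma avg {γ : Measure ℂ} [IsProbabilityMeasure γ] (hγ : RotInv γ) (f : ℂ → ℝ≥0∞)
    (hf : Measurable f) :
    ∫⁻ c, f c ∂γ = ∫⁻ c, ∫⁻ θ, f (‖c‖ * Complex.exp (θ * Complex.I)) ∂tau ∂γ := by
  have h1 : ∀ θ : ℝ, ∫⁻ c, f c ∂γ = ∫⁻ c, f (Complex.exp (θ * Complex.I) * c) ∂γ := by
    intro θ
    conv_lhs => rw [← hγ θ]
    rw [lintegral_map hf (by fun_prop)]
  have h2 : ∫⁻ c, f c ∂γ = ∫⁻ θ, ∫⁻ c, f (Complex.exp (θ * Complex.I) * c) ∂γ ∂tau := by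
    simp_rw [← h1]
    simp
  rw [h2, lintegral_lintegral_swap (by fun_prop)]
  refine lintegral_congr fun c => ?_
  rw [← shift (fun θ : ℝ => f (‖c‖ * Complex.exp (θ * Complex.I))) _ c.arg]
  · refine lintegral_congr fun θ => ?_
    congr 1
    conv_lhs => rw [← Complex.norm_mul_exp_arg_mul_I c]
    push_cast
    rw [add_mul, Complex.exp_add]
    ring
  · intro θ
    simp only
    rw [exp_periodic]

lemma normSq_formula (b : ℂ) (r θ : ℝ) :
    ‖b + r * Complex.exp ((θ + b.arg : ℝ) * Complex.I)‖ ^ 2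
      = ‖b‖ ^ 2 + r ^ 2 + 2 * ‖b‖ * r * Real.cos θ := by
  have : b + r * Complex.exp ((θ + b.arg : ℝ) * Complex.I)
      = Complex.exp (b.arg * Complex.I) * (‖b‖ + r * Complex.exp (θ * Complex.I)) := by
    have hb := Complex.norm_mul_exp_arg_mul_I b
    push_cast
    rw [add_mul, Complex.exp_add]
    linear_combination -hb
  rw [this, norm_mul, Complex.norm_exp_ofReal_mul_I, one_mul, ← Complex.normSq_eq_norm_sq,
    Complex.normSq_apply]
  simp [Complex.exp_ofReal_mul_I_re, Complex.exp_ofReal_mul_I_im]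
  nlinarith [Real.sin_sq_add_cos_sq θ]

lemma avg_norm (b : ℂ) (r : ℝ) (S : Set ℝ) :
    ∫⁻ θ, S.indicator 1 ‖b + r * Complex.exp (θ * Complex.I)‖ ∂tau
     = ∫⁻ θ, S.indicator 1 (√(‖b‖ ^ 2 + r ^ 2 + 2 * ‖b‖ * r * Real.cos θ)) ∂tau := by
  rw [← shift (fun θ : ℝ => S.indicator (1 : ℝ → ℝ≥0∞) ‖b + r * Complex.exp (θ * Complex.I)‖) _ b.arg]
  · refine lintegral_congr fun θ => ?_
    rw [← normSq_formula, Real.sqrt_sq (norm_nonneg _)]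
  · intro θ
    simp only
    rw [exp_periodic]

lemma tau_cos_lt (t : ℝ) : tau {θ | Real.cos θ < t} = ENNReal.ofReal (Real.arccos (-t) / Real.pi) := by
  have hpi := Real.pi_pos
  have hv : volume ({θ | Real.cos θ < t} ∩ Set.Ioc 0 (2 * Real.pi))
      = ENNReal.ofReal (2 * Real.arccos (-t)) := by
    rw [Real.arccos_neg]
    rcases lt_or_ge 1 t with ht | ht
    · rw [Set.inter_eq_self_of_subset_right]
      · rw [Real.volume_Ioc, Real.arccos_of_one_le ht.le]; simp
      · intro x _
        exact (Real.cos_le_one x).trans_lt ht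
    · have : {θ | Real.cos θ < t} ∩ Set.Ioc 0 (2 * Real.pi)
          = Set.Ioo (Real.arccos t) (2 * Real.pi - Real.arccos t) := by
        rcases lt_or_ge t (-1) with ht' | ht'
        · rw [Real.arccos_of_le_neg_one ht'.le, Set.Ioo_eq_empty (by linarith)]
          ext x
          have := Real.neg_one_le_cos x
          simp; intro h; linarith
        have h0 := Real.arccos_nonneg t
        have h1 := Real.arccos_le_pi t
        have hc := Real.cos_arccos ht' ht
        have key : ∀ x, 0 ≤ x → x ≤ Real.pi → (Real.cos x < t ↔ Real.arccos t < x) := by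
          intro x hx hx'
          conv_lhs => rw [← hc]
          exact Real.strictAntiOn_cos.lt_iff_gt ⟨hx, hx'⟩ ⟨h0, h1⟩
        ext x
        simp only [Set.mem_inter_iff, Set.mem_ofPred_eq, Set.mem_Ioc, Set.mem_Ioo]
        rcases le_total x Real.pi with hx | hx
        · constructor
          · rintro ⟨h, h', _⟩
            have := (key x h'.le hx).1 h
            exact ⟨this, by linarith⟩
          · rintro ⟨h, h'⟩
            have hx0 : 0 < x := by linarith
            exact ⟨(key x hx0.le hx).2 h, hx0, by linarith⟩
        · have hcx : Real.cos x = Real.cos (2 * Real.pi - x) := by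
            rw [Real.cos_two_pi_sub]
          rw [hcx]
          constructor
          · rintro ⟨h, h', h''⟩
            have := (key (2 * Real.pi - x) (by linarith) (by linarith)).1 h
            exact ⟨by linarith, by linarith⟩
          · rintro ⟨h, h'⟩
            exact ⟨(key (2 * Real.pi - x) (by linarith) (by linarith)).2 (by linarith),
              by linarith, by linarith⟩
      rw [this, Real.volume_Ioo]
      congr 1; ring
  have hm : MeasurableSet {θ | Real.cos θ < t} :=
    measurableSet_lt (by fun_prop) (by fun_prop)
  unfold tau
  rw [Measure.smul_apply, Measure.restrict_apply hm, hv, smul_eq_mul,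
    ← ENNReal.ofReal_inv_of_pos (by positivity), ← ENNReal.ofReal_mul (by positivity)]
  congr 1
  field_simp

lemma tau_cos_eq (t : ℝ) : tau {θ | Real.cos θ = t} = 0 := by
  have hm : MeasurableSet {θ | Real.cos θ = t} :=
    measurableSet_eq_fun (by fun_prop) (by fun_prop)
  unfold tau
  rw [Measure.smul_apply, Measure.restrict_apply hm]
  have : volume ({θ | Real.cos θ = t} ∩ Set.Ioc 0 (2 * Real.pi)) = 0 := by
    refine measure_mono_null (t := {Real.arccos t, 2 * Real.pi - Real.arccos t}) ?_
      ((Set.toFinite _).measure_zero _)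
    rintro x ⟨hx, h0, h1⟩
    simp only [Set.mem_ofPred_eq] at hx
    subst hx
    rcases le_total x Real.pi with hx | hx
    · left
      rw [Real.arccos_cos h0.le hx]
    · right
      have hcx : Real.cos x = Real.cos (2 * Real.pi - x) := by
        rw [Real.cos_two_pi_sub]
      rw [hcx, Real.arccos_cos (by linarith) (by linarith)]
      simp
  rw [this]; simp

noncomputable def G (a b c : ℝ) : ℝ :=
  Real.arccos ((b ^ 2 + c ^ 2 - a ^ 2) / (2 * b * c)) / Real.pi

lemma G_nonneg (a b c : ℝ) : 0 ≤ G a b c :=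
  div_nonneg (Real.arccos_nonneg _) Real.pi_pos.le

lemma G_symm (a b c : ℝ) : G a b c = G a c b := by
  unfold G; congr 2; ring

lemma G_far {a b c : ℝ} (hb : 0 < b) (hc : 0 < c) (h : b + c ≤ a) : G a b c = 1 := by
  unfold G
  rw [Real.arccos_of_le_neg_one, div_self Real.pi_pos.ne']
  rw [div_le_iff₀ (by positivity)]
  nlinarith

lemma G_near {a b c : ℝ} (ha : 0 < a) (hb : 0 < b) (hc : 0 < c) (h : a + c ≤ b) : G a b c = 0 := by
  unfold G
  rw [Real.arccos_of_one_le, zero_div]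
  rw [le_div_iff₀ (by positivity)]
  nlinarith

lemma G_sum {a b c : ℝ} (ha : 0 < a) (hb : 0 < b) (hc : 0 < c) :
    G a b c + G b a c + G c a b = 1 := by
  rcases le_or_gt (b + c) a with h1 | h1
  · rw [G_far hb hc h1, G_near hb ha hc h1, G_near hc ha hb (by linarith)]; ring
  rcases le_or_gt (a + c) b with h2 | h2
  · rw [G_far ha hc h2, G_near ha hb hc h2, G_symm c, G_near hc hb ha (by linarith)]; ring
  rcases le_or_gt (a + b) c with h3 | h3
  · rw [G_far ha hb h3, G_symm a, G_near ha hc hb h3, G_symm b, G_near hb hc ha (by linarith)]; ring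
  unfold G
  set x := (b ^ 2 + c ^ 2 - a ^ 2) / (2 * b * c) with hx
  set y := (a ^ 2 + c ^ 2 - b ^ 2) / (2 * a * c) with hy
  set z := (a ^ 2 + b ^ 2 - c ^ 2) / (2 * a * b) with hz
  have x1 : x ≤ 1 := by rw [hx, div_le_iff₀ (by positivity)]; nlinarith
  have x2 : -1 ≤ x := by rw [hx, le_div_iff₀ (by positivity)]; nlinarith
  have y1 : y ≤ 1 := by rw [hy, div_le_iff₀ (by positivity)]; nlinarith
  have y2 : -1 ≤ y := by rw [hy, le_div_iff₀ (by positivity)]; nlinarith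
  set K := (a + b + c) * (b + c - a) * (a + c - b) * (a + b - c) with hK
  have hK0 : 0 ≤ K := by
    have : 0 < b + c - a := by linarith
    have : 0 < a + c - b := by linarith
    have : 0 < a + b - c := by linarith
    positivity
  have sx : Real.sin (Real.arccos x) = √K / (2 * b * c) := by
    rw [Real.sin_arccos]
    have : 1 - x ^ 2 = K / (2 * b * c) ^ 2 := by
      rw [hx, hK]; field_simp; ring
    rw [this, Real.sqrt_div hK0, Real.sqrt_sq (by positivity)]
  have sy : Real.sin (Real.arccos y) = √K / (2 * a * c) := by
    rw [Real.sin_arccos]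
    have : 1 - y ^ 2 = K / (2 * a * c) ^ 2 := by
      rw [hy, hK]; field_simp; ring
    rw [this, Real.sqrt_div hK0, Real.sqrt_sq (by positivity)]
  have hcos : Real.cos (Real.arccos x + Real.arccos y) = -z := by
    rw [Real.cos_add, sx, sy, Real.cos_arccos x2 x1, Real.cos_arccos y2 y1,
      div_mul_div_comm (√K), Real.mul_self_sqrt hK0, hx, hy, hz, hK]
    field_simp
    ring
  have hle : Real.arccos x + Real.arccos y ≤ Real.pi := by
    have h : -y ≤ x := by
      have : 0 ≤ x + y := by
        have : x + y = (a + b) * (c + a - b) * (c + b - a) / (2 * a * b * c) := by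
          rw [hx, hy]; field_simp; ring
        rw [this]
        have : 0 < b + c - a := by linarith
        have : 0 < a + c - b := by linarith
        have h3 : 0 < c + a - b := by linarith
        have h4 : 0 < c + b - a := by linarith
        positivity
      linarith
    have := Real.arccos_le_arccos h
    rw [Real.arccos_neg] at this
    linarith
  have hz' : Real.arccos z = Real.pi - (Real.arccos x + Real.arccos y) := by
    have : z = - Real.cos (Real.arccos x + Real.arccos y) := by rw [hcos]; ring
    rw [this, Real.arccos_neg, Real.arccos_cos _ hle]
    have := Real.arccos_nonneg x
    have := Real.arccos_nonneg y
    positivity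
  rw [hz']
  have := Real.pi_pos
  field_simp
  ring

lemma tau_G {a b r : ℝ} (ha : 0 < a) (hb : 0 < b) (hr : 0 < r) :
    ∫⁻ θ, (Set.Iio a).indicator 1 (√(b ^ 2 + r ^ 2 + 2 * b * r * Real.cos θ)) ∂tau
      = ENNReal.ofReal (G a b r) := by
  have h : ∀ θ, (Set.Iio a).indicator (1 : ℝ → ℝ≥0∞) (√(b ^ 2 + r ^ 2 + 2 * b * r * Real.cos θ))
      = {θ | Real.cos θ < -((b ^ 2 + r ^ 2 - a ^ 2) / (2 * b * r))}.indicator 1 θ := by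
    intro θ
    have : √(b ^ 2 + r ^ 2 + 2 * b * r * Real.cos θ) < a ↔
        Real.cos θ < -((b ^ 2 + r ^ 2 - a ^ 2) / (2 * b * r)) := by
      rw [Real.sqrt_lt' ha, ← neg_div, lt_div_iff₀ (by positivity)]
      constructor <;> intro h <;> linarith
    by_cases h : Real.cos θ < -((b ^ 2 + r ^ 2 - a ^ 2) / (2 * b * r))
    · rw [Set.indicator_of_mem (Set.mem_Iio.2 (this.2 h)), Set.indicator_of_mem (by exact h)]; rfl
    · rw [Set.indicator_of_notMem (fun h' => h (this.1 (Set.mem_Iio.1 h'))),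
        Set.indicator_of_notMem (by exact h)]
  simp_rw [h]
  rw [lintegral_indicator_one (measurableSet_lt (by fun_prop) (by fun_prop)), tau_cos_lt, neg_neg]
  rfl

lemma tau_eq {a b r : ℝ} (hb : 0 < b) (hr : 0 < r) :
    ∫⁻ θ, ({a} : Set ℝ).indicator 1 (√(b ^ 2 + r ^ 2 + 2 * b * r * Real.cos θ)) ∂tau = 0 := by
  rw [← nonpos_iff_eq_zero, ← tau_cos_eq ((a ^ 2 - b ^ 2 - r ^ 2) / (2 * b * r)),
    ← lintegral_indicator_one (measurableSet_eq_fun (by fun_prop) (by fun_prop))]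
  refine lintegral_mono fun θ => ?_
  refine Set.indicator_le' (s := {θ | √(b ^ 2 + r ^ 2 + 2 * b * r * Real.cos θ) = a})
    (f := 1) (g := _) ?_ ?_ θ
  · intro x hx
    have hx : √(b ^ 2 + r ^ 2 + 2 * b * r * Real.cos x) = a := hx
    rw [Set.indicator_of_mem]
    show _ = _
    have h0 : 0 ≤ b ^ 2 + r ^ 2 + 2 * b * r * Real.cos x := by
      nlinarith [Real.neg_one_le_cos x, mul_pos hb hr, sq_nonneg (b - r)]
    rw [eq_div_iff (by positivity), ← hx, Real.sq_sqrt h0]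
    ring
  · intro x _
    exact zero_le

lemma rot_measure {γ : Measure ℂ} [IsProbabilityMeasure γ] (hγ : RotInv γ) (b : ℂ) (S : Set ℝ)
    (hS : MeasurableSet S) :
    γ {c | ‖b + c‖ ∈ S} = ∫⁻ c, ∫⁻ θ, S.indicator 1
      (√(‖b‖ ^ 2 + ‖c‖ ^ 2 + 2 * ‖b‖ * ‖c‖ * Real.cos θ)) ∂tau ∂γ := by
  have hm : Measurable (fun c : ℂ => ‖b + c‖) := by fun_prop
  change γ ((fun c : ℂ => ‖b + c‖) ⁻¹' S) = _
  rw [← lintegral_indicator_one (hm hS), avg hγ]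
  · refine lintegral_congr fun c => ?_
    rw [← avg_norm]
    rfl
  · exact measurable_one.indicator (hm hS)

lemma ae_ne {γ : Measure ℂ} (h0 : γ {0} = 0) : ∀ᵐ c ∂γ, 0 < ‖c‖ := by
  rw [ae_iff]
  convert h0 using 2
  ext; simp

lemma rot_lt {γ : Measure ℂ} [IsProbabilityMeasure γ] (hγ : RotInv γ) (h0 : γ {0} = 0)
    {b : ℂ} (hb : 0 < ‖b‖) {a : ℝ} (ha : 0 < a) :
    γ {c | ‖b + c‖ < a} = ∫⁻ c, ENNReal.ofReal (G a ‖b‖ ‖c‖) ∂γ := by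
  have := rot_measure hγ b (Set.Iio a) measurableSet_Iio
  refine this.trans (lintegral_congr_ae ?_)
  filter_upwards [ae_ne h0] with c hc
  exact tau_G ha hb hc

lemma rot_eq {γ : Measure ℂ} [IsProbabilityMeasure γ] (hγ : RotInv γ) (h0 : γ {0} = 0)
    {b : ℂ} (hb : 0 < ‖b‖) (a : ℝ) :
    γ {c | ‖b + c‖ = a} = 0 := by
  have := rot_measure hγ b {a} (measurableSet_singleton a)
  refine this.trans ?_
  rw [← lintegral_zero (μ := γ)]
  refine lintegral_congr_ae ?_
  filter_upwards [ae_ne h0] with c hc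
  exact tau_eq hb hc

lemma sum_noatom {β γ : Measure ℂ} [IsProbabilityMeasure β] [IsProbabilityMeasure γ]
    (hγ : RotInv γ) (h0 : γ {0} = 0) (h0' : β {0} = 0) (a : ℝ) :
    ((β.prod γ).map (fun q => q.1 + q.2)) {z | ‖z‖ = a} = 0 := by
  have hm : MeasurableSet {z : ℂ | ‖z‖ = a} := measurableSet_eq_fun (by fun_prop) (by fun_prop)
  have hf : Measurable (fun q : ℂ × ℂ => q.1 + q.2) := by fun_prop
  rw [Measure.map_apply hf hm, Measure.prod_apply (hf hm), ← lintegral_zero (μ := β)]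
  refine lintegral_congr_ae ?_
  filter_upwards [ae_ne h0'] with b hb
  exact rot_eq hγ h0 hb a

lemma sigma_ne (μ : Measure ℝ) [IsProbabilityMeasure μ] (hμ : ∀ᵐ x ∂μ, 0 < x) :
    sigma μ {0} = 0 := by
  unfold sigma
  rw [Measure.map_apply measurable_step (measurableSet_singleton 0)]
  have : step ⁻¹' {0} = ({0} : Set ℝ) ×ˢ Set.univ := by
    ext q; simp [step]
  rw [this, Measure.prod_prod]
  have : μ {0} = 0 := by
    refine measure_mono_null ?_ hμ
    intro x hx
    simp at hx
    simp [hx]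
  rw [this, zero_mul]

lemma nu_ne (μ : Measure ℝ) [IsProbabilityMeasure μ] (hμ : ∀ᵐ x ∂μ, 0 < x) (n : ℕ) :
    nu μ (n + 1) {0} = 0 := by
  induction n with
  | zero => rw [zero_add, nu_one]; exact sigma_ne μ hμ
  | succ n ih =>
    rw [nu_add μ (n + 1) 1]
    have := sum_noatom (rotInv_nu μ 1) (by rw [nu_one]; exact sigma_ne μ hμ) ih 0
    convert this using 2
    ext; simp

lemma nu_noatom (μ : Measure ℝ) [IsProbabilityMeasure μ] (hμ : ∀ᵐ x ∂μ, 0 < x) (n : ℕ) (a : ℝ) :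
    nu μ (n + 2) {z | ‖z‖ = a} = 0 := by
  rw [nu_add μ (n + 1 ) 1]
  exact sum_noatom (rotInv_nu μ 1) (by rw [nu_one]; exact sigma_ne μ hμ) (nu_ne μ hμ n) a

/-- probability that the first is longer than the second -/
noncomputable def A (α β : Measure ℂ) : ℝ≥0∞ := (α.prod β) {q | ‖q.2‖ < ‖q.1‖}

lemma A_eq (α β γ : Measure ℂ) [IsProbabilityMeasure α] [IsProbabilityMeasure β]
    [IsProbabilityMeasure γ] (hγ : RotInv γ) (hα0 : α {0} = 0) (hβ0 : β {0} = 0) (hγ0 : γ {0} = 0) :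
    A α ((β.prod γ).map (fun q => q.1 + q.2))
      = ∫⁻ a, ∫⁻ b, ∫⁻ c, ENNReal.ofReal (G ‖a‖ ‖b‖ ‖c‖) ∂γ ∂β ∂α := by
  have : IsProbabilityMeasure ((β.prod γ).map (fun q => q.1 + q.2)) :=
    Measure.isProbabilityMeasure_map (by fun_prop)
  have hm : MeasurableSet {q : ℂ × ℂ | ‖q.2‖ < ‖q.1‖} :=
    measurableSet_lt (by fun_prop) (by fun_prop)
  have hf : Measurable (fun q : ℂ × ℂ => q.1 + q.2) := by fun_prop
  unfold A
  rw [Measure.prod_apply hm]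
  refine lintegral_congr_ae ?_
  filter_upwards [ae_ne hα0] with a ha
  have hm' : MeasurableSet {z : ℂ | ‖z‖ < ‖a‖} := measurableSet_lt (by fun_prop) (by fun_prop)
  change ((β.prod γ).map (fun q => q.1 + q.2)) {z : ℂ | ‖z‖ < ‖a‖} = _
  rw [Measure.map_apply hf hm', Measure.prod_apply (hf hm')]
  refine lintegral_congr_ae ?_
  filter_upwards [ae_ne hβ0] with b hb
  exact rot_lt hγ hγ0 hb ha

lemma swap12 (α β γ : Measure ℂ) [IsProbabilityMeasure α] [IsProbabilityMeasure β]
    [IsProbabilityMeasure γ] (F : (ℂ × ℂ) × ℂ → ℝ≥0∞) (hF : Measurable F) :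
    ∫⁻ b, ∫⁻ a, ∫⁻ c, F ((b, a), c) ∂γ ∂α ∂β = ∫⁻ a, ∫⁻ b, ∫⁻ c, F ((b, a), c) ∂γ ∂β ∂α :=
  lintegral_lintegral_swap (f := fun b a => ∫⁻ c, F ((b, a), c) ∂γ)
    (hF.lintegral_prod_right' (ν := γ)).aemeasurable

lemma int_prod (α β γ : Measure ℂ) [IsProbabilityMeasure α] [IsProbabilityMeasure β]
    [IsProbabilityMeasure γ] (F : (ℂ × ℂ) × ℂ → ℝ≥0∞) (hF : Measurable F) :
    ∫⁻ a, ∫⁻ b, ∫⁻ c, F ((a, b), c) ∂γ ∂β ∂α = ∫⁻ q, F q ∂((α.prod β).prod γ) := by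
  rw [lintegral_prod _ hF.aemeasurable,
    lintegral_prod _ (hF.lintegral_prod_right' (ν := γ)).aemeasurable]

lemma three (α β γ : Measure ℂ) [IsProbabilityMeasure α] [IsProbabilityMeasure β]
    [IsProbabilityMeasure γ] (hβ : RotInv β) (hγ : RotInv γ)
    (hα0 : α {0} = 0) (hβ0 : β {0} = 0) (hγ0 : γ {0} = 0) :
    A α ((β.prod γ).map (fun q => q.1 + q.2)) + A β ((α.prod γ).map (fun q => q.1 + q.2))
      + A γ ((α.prod β).map (fun q => q.1 + q.2)) = 1 := by
  rw [A_eq α β γ hγ hα0 hβ0 hγ0, A_eq β α γ hγ hβ0 hα0 hγ0, A_eq γ α β hβ hγ0 hα0 hβ0]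
  obtain ⟨F, hFdef⟩ : ∃ F : (ℂ × ℂ) × ℂ → ℝ≥0∞,
      F = fun q => ENNReal.ofReal (G ‖q.1.1‖ ‖q.1.2‖ ‖q.2‖) := ⟨_, rfl⟩
  have hF : Measurable F := by
    rw [hFdef]
    unfold G
    have := Real.measurable_arccos
    fun_prop
  have hFa : ∀ a b c : ℂ, ENNReal.ofReal (G ‖a‖ ‖b‖ ‖c‖) = F ((a, b), c) := by
    intro a b c; rw [hFdef]
  have hsum : ∀ a b c : ℂ, 0 < ‖a‖ → 0 < ‖b‖ → 0 < ‖c‖ →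
      F ((a, b), c) + F ((b, a), c) + F ((c, a), b) = 1 := by
    intro a b c ha hb hc
    rw [← hFa, ← hFa, ← hFa, ← ENNReal.ofReal_add (G_nonneg _ _ _) (G_nonneg _ _ _),
      ← ENNReal.ofReal_add (add_nonneg (G_nonneg _ _ _) (G_nonneg _ _ _)) (G_nonneg _ _ _),
      G_sum ha hb hc]
    simp
  simp_rw [hFa]
  clear hFa hFdef
  have m2 : Measurable fun q : (ℂ × ℂ) × ℂ => F ((q.1.2, q.1.1), q.2) :=
    hF.comp (by fun_prop)
  have m3 : Measurable fun q : (ℂ × ℂ) × ℂ => F ((q.2, q.1.1), q.1.2) :=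
    hF.comp (by fun_prop)
  have e2 := (swap12 α β γ F hF).trans (int_prod α β γ _ m2)
  have e3 : ∫⁻ c, ∫⁻ a, ∫⁻ b, F ((c, a), b) ∂β ∂α ∂γ
      = ∫⁻ q, F ((q.2, q.1.1), q.1.2) ∂((α.prod β).prod γ) := by
    rw [swap12 α γ β F hF, ← int_prod α β γ _ m3]
    refine lintegral_congr fun a => ?_
    exact lintegral_lintegral_swap (f := fun c b => F ((c, a), b))
      (hF.comp (by fun_prop : Measurable fun q : ℂ × ℂ => ((q.1, a), q.2))).aemeasurable
  rw [int_prod α β γ F hF, e2, e3, ← lintegral_add_left hF, ← lintegral_add_right _ m3]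
  have one : ∫⁻ _, 1 ∂((α.prod β).prod γ) = (1 : ℝ≥0∞) := by simp
  rw [← one]
  refine lintegral_congr_ae ?_
  have i3 : ∀ᵐ q ∂((α.prod β).prod γ), 0 < ‖q.2‖ :=
    Measure.quasiMeasurePreserving_snd.ae (ae_ne hγ0)
  have i1 : ∀ᵐ q ∂((α.prod β).prod γ), 0 < ‖q.1.1‖ :=
    Measure.quasiMeasurePreserving_fst.ae
      (Measure.quasiMeasurePreserving_fst.ae (ae_ne hα0))
  have i2 : ∀ᵐ q ∂((α.prod β).prod γ), 0 < ‖q.1.2‖ :=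
    Measure.quasiMeasurePreserving_fst.ae
      (Measure.quasiMeasurePreserving_snd.ae (ae_ne hβ0))
  filter_upwards [i1, i2, i3] with q h1 h2 h3
  exact hsum q.1.1 q.1.2 q.2 h1 h2 h3

lemma tie_left (α β : Measure ℂ) [IsProbabilityMeasure α] [IsProbabilityMeasure β]
    (h : ∀ a, β {z | ‖z‖ = a} = 0) : A α β + A β α = 1 := by
  have hm : MeasurableSet {q : ℂ × ℂ | ‖q.2‖ < ‖q.1‖} :=
    measurableSet_lt (by fun_prop) (by fun_prop)
  have hm2 : MeasurableSet {q : ℂ × ℂ | ‖q.1‖ < ‖q.2‖} :=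
    measurableSet_lt (by fun_prop) (by fun_prop)
  have hm3 : MeasurableSet {q : ℂ × ℂ | ‖q.2‖ = ‖q.1‖} :=
    measurableSet_eq_fun (by fun_prop) (by fun_prop)
  have hs : A β α = (α.prod β) {q | ‖q.1‖ < ‖q.2‖} := by
    unfold A
    rw [← Measure.prod_swap, Measure.map_apply measurable_swap hm]
    rfl
  have ht : (α.prod β) {q : ℂ × ℂ | ‖q.2‖ = ‖q.1‖} = 0 := by
    rw [Measure.prod_apply hm3, ← lintegral_zero (μ := α)]
    exact lintegral_congr fun a => h ‖a‖
  rw [hs]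
  unfold A
  have hc : {q : ℂ × ℂ | ‖q.2‖ < ‖q.1‖}ᶜ = {q : ℂ × ℂ | ‖q.1‖ < ‖q.2‖} ∪ {q | ‖q.2‖ = ‖q.1‖} := by
    ext q
    simp [le_iff_lt_or_eq, eq_comm]
  rw [← prob_add_prob_compl (μ := α.prod β) hm, hc]
  congr 1
  refine le_antisymm (measure_mono Set.subset_union_left) ((measure_union_le _ _).trans ?_)
  rw [ht, add_zero]

lemma walk_A (μ : Measure ℝ) [IsProbabilityMeasure μ] (m n : ℕ) :
    ((walkDist μ m).prod (walkDist μ n)) {q : ℝ × ℝ | q.2 < q.1} = A (nu μ m) (nu μ n) := by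
  have hm : MeasurableSet {q : ℝ × ℝ | q.2 < q.1} :=
    measurableSet_lt (by fun_prop) (by fun_prop)
  rw [walkDist_eq, walkDist_eq, Measure.map_prod_map _ _ (by fun_prop) (by fun_prop),
    Measure.map_apply (by fun_prop) hm]
  rfl

end RW

theorem stmt_7 {Ω : Type*} [MeasurableSpace Ω] (P : Measure Ω) [IsProbabilityMeasure P]
    (X : Ω → ℝ) (hX : Measurable X) (hXpos : ∀ ω, 0 < X ω)
    (s : ℕ) (hs : 2 < s) (p : ℕ → ℝ≥0∞)
    (hp : ∀ i ≤ s, p i =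
      ((walkDist (Measure.map X P) i).prod (walkDist (Measure.map X P) (s - i)))
        {q : ℝ × ℝ | q.2 < q.1}) :
    (∀ i, 1 ≤ i → i ≤ s → p i = i * p 1) ∧ p 1 = 1 / s := by
  have : IsProbabilityMeasure (Measure.map X P) :=
    Measure.isProbabilityMeasure_map hX.aemeasurable
  have hμ : ∀ᵐ x ∂(Measure.map X P), 0 < x := by
    rw [ae_map_iff hX.aemeasurable measurableSet_Ioi]
    exact Filter.Eventually.of_forall hXpos
  generalize Measure.map X P = μ at *
  simp_rw [RW.walk_A] at hp
  have hne : ∀ n, 1 ≤ n → RW.nu μ n {0} = 0 := by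
    intro n hn
    obtain ⟨k, rfl⟩ := Nat.exists_eq_add_of_le' hn
    exact RW.nu_ne μ hμ k
  have hna : ∀ n, 2 ≤ n → ∀ a, RW.nu μ n {z | ‖z‖ = a} = 0 := by
    intro n hn
    obtain ⟨k, rfl⟩ := Nat.exists_eq_add_of_le' hn
    exact RW.nu_noatom μ hμ k
  -- no ties
  have tie : ∀ i ≤ s, p i + p (s - i) = 1 := by
    intro i hi
    rw [hp i hi, hp (s - i) (by omega), Nat.sub_sub_self hi]
    rcases le_or_gt 2 (s - i) with h | h
    · exact RW.tie_left _ _ (hna _ h)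
    · rw [add_comm]
      exact RW.tie_left _ _ (hna _ (by omega))
  have h3 : ∀ i j k, 1 ≤ i → 1 ≤ j → 1 ≤ k → i + j + k = s → p i + p j + p k = 1 := by
    intro i j k hi hj hk hs
    rw [hp i (by omega), hp j (by omega), hp k (by omega)]
    have e1 : s - i = j + k := by omega
    have e2 : s - j = i + k := by omega
    have e3 : s - k = i + j := by omega
    rw [e1, e2, e3, RW.nu_add, RW.nu_add, RW.nu_add]
    exact RW.three _ _ _ (RW.rotInv_nu μ _) (RW.rotInv_nu μ _) (hne _ hi) (hne _ hj) (hne _ hk)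
  have hp0 : p 0 = 0 := by
    rw [hp 0 (by omega)]
    unfold RW.A
    rw [RW.nu_zero, Measure.dirac_prod, Measure.map_apply (by fun_prop)
      (measurableSet_lt (by fun_prop) (by fun_prop))]
    convert measure_empty (μ := RW.nu μ (s - 0))
    ext z
    simp
  have hps : p s = 1 := by
    have := tie 0 (by omega)
    rwa [hp0, zero_add, Nat.sub_zero] at this
  have fin : ∀ i ≤ s, p i ≠ ∞ := by
    intro i hi h
    have := tie i hi
    rw [h] at this
    simp at this
  have step : ∀ i, 1 ≤ i → i + 1 ≤ s → p (i + 1) = p i + p 1 := by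
    intro i hi his
    rcases Nat.eq_or_lt_of_le his with h | h
    · have := tie i (by omega)
      have e : s - i = 1 := by omega
      rw [h, hps, ← this, e]
    · have a := h3 i 1 (s - (i + 1)) hi le_rfl (by omega) (by omega)
      have b := tie (i + 1) his
      exact (ENNReal.add_left_inj (fin (s - (i + 1)) (by omega))).1 (b.trans a.symm)
  have main : ∀ i, 1 ≤ i → i ≤ s → p i = i * p 1 := by
    intro i hi
    induction i, hi using Nat.le_induction with
    | base => intro _; simp
    | succ i hi ih =>
      intro h
      rw [step i hi h, ih (by omega)]
      push_cast
      ring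
  refine ⟨main, ?_⟩
  have := main s (by omega) le_rfl
  rw [hps] at this
  rw [ENNReal.eq_div_iff (by simp; omega) (by simp)]
  exact this.symm
end
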